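/- arXiv:2309.05864 — 2 statements merged into one kernel-verified Lean document; each statement's English description precedes it below -/
import Mathlib

section
/- Let A be the 2×4 integer matrix with columns a₁ = (0,1), a₂ = (1,2), a₃ = (2,2), a₄ = (3,0), and let I_A ⊆ ℂ[∂₁,∂₂,∂₃,∂₄] be its toric ideal. Then ℂ[∂₁,…,∂₄]/I_A is Cohen–Macaulay, but ℂ[∂₁,…,∂₄]/in(I_A) is not Cohen–Macaulay, where in(I_A) is the initial ideal of I_A with respect to total degree. In particular, Cohen–Macaulayness of a toric ring does not imply Cohen–Macaulayness of its Gröbner deformation by total degree. -/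
/-!
Write `a, b, c, d` for `∂₁, …, ∂₄`. The toric ideal contains `b² - a²c`, `bc - a⁴d` and
`c² - a²bd`.

*The toric ring is Cohen–Macaulay.* These relations show that `ℂ[∂]/I_A` is spanned over `ℂ[a, d]`
by `1, b, c` (`toRA_span`), and mapping it to `ℂ[t₁, t₂]`, which is free over
`ℂ[a, d] = ℂ[t₂, t₁³]` with basis `1, t₁, t₁²`, shows that `1, b, c` are linearly independent
(`toRA_rel`). So the toric ring is finite and free over a polynomial ring in two variables.
Every prime `q` of that ring contains a regular sequence of length at least `height q`; by flatness
such a sequence remains regular in the localizations of the toric ring, where it computes the depth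
by the theorem of Rees (`isCohenMacaulayRing_of_flat`).

*The initial ring is not.* The leading monomials `a⁴d`, `a²bd`, `a²c` lie in `in(I_A)`, so the
class of `a³d` is killed by `a`, `b` and `c`. On the other hand, a monomial occurring in an initial
form of an element of `I_A` cannot be the unique monomial of minimal total degree in its
`A`-degree (`in1_le`). Hence no monomial `aⁱdʲ` with `i ≤ 3` is in `in(I_A)`, and the class of
`a³d` survives in the localization at `(a, b, c)`, which therefore has depth zero
(`ringDepth_eq_zero`). Similarly `in(I_A) ⊆ (a, b)`, so `(a, b, c)` is not a minimal prime and the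
dimension of this localization is positive.
-/

open MvPolynomial CategoryTheory

noncomputable section

/-- The set of columns of an integer matrix. -/
def cols {d n : ℕ} (A : Matrix (Fin d) (Fin n) ℤ) : Set (Fin d → ℤ) :=
  Set.range fun j i => A i j

/-- The affine semigroup `ℕA` generated by the columns of `A` is pointed. -/
def IsPointed {d n : ℕ} (A : Matrix (Fin d) (Fin n) ℤ) : Prop :=
  ∀ v ∈ AddSubmonoid.closure (cols A),
    -v ∈ AddSubmonoid.closure (cols A) → v = 0

/-- The toric ideal `I_A ⊆ ℂ[∂₁,…,∂ₙ]`, generated by the binomials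
`∂^u - ∂^v` with `Au = Av`. -/
def toricIdeal {d n : ℕ} (A : Matrix (Fin d) (Fin n) ℤ) :
    Ideal (MvPolynomial (Fin n) ℂ) :=
  Ideal.span { f | ∃ u v : Fin n →₀ ℕ,
    A.mulVec (fun j => (u j : ℤ)) = A.mulVec (fun j => (v j : ℤ)) ∧
    f = monomial u 1 - monomial v 1 }

/-- The `L`-weight of an exponent vector. -/
def wt {n : ℕ} (L : Fin n → ℚ) (u : Fin n →₀ ℕ) : ℚ := ∑ j, L j * (u j : ℚ)

/-- The `L`-initial form of a polynomial: the sum of its terms of maximal `L`-weight. -/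
def initialForm {n : ℕ} (L : Fin n → ℚ) (f : MvPolynomial (Fin n) ℂ) :
    MvPolynomial (Fin n) ℂ :=
  ∑ u ∈ f.support.filter fun u => ∀ v ∈ f.support, wt L v ≤ wt L u,
    monomial u (f.coeff u)

/-- The `L`-initial ideal `in_L(I)` of an ideal `I ⊆ ℂ[∂₁,…,∂ₙ]`. -/
def initialIdeal {n : ℕ} (L : Fin n → ℚ) (I : Ideal (MvPolynomial (Fin n) ℂ)) :
    Ideal (MvPolynomial (Fin n) ℂ) :=
  Ideal.span { g | ∃ f ∈ I, f ≠ 0 ∧ g = initialForm L f }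

/-- The depth of a Noetherian local ring `R`, i.e. `inf { i | Ext^i_R(R/m, R) ≠ 0 }`. -/
def ringDepth (R : Type) [CommRing R] [IsLocalRing R] : ℕ∞ :=
  sInf { i : ℕ∞ | ∃ m : ℕ, i = m ∧
    Nontrivial (((Ext R (ModuleCat.{0} R) m).obj
        (Opposite.op (ModuleCat.of R (R ⧸ IsLocalRing.maximalIdeal R)))).obj
      (ModuleCat.of R R)) }

/-- A commutative ring `T` is Cohen–Macaulay if for every prime ideal `p`, the
localization `T_p` satisfies `depth = Krull dimension`. -/
def IsCohenMacaulayRing (T : Type) [CommRing T] : Prop :=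
  ∀ (p : Ideal T) [p.IsPrime],
    (ringDepth (Localization.AtPrime p) : WithBot ℕ∞) =
      ringKrullDim (Localization.AtPrime p)

/-- The Euler operator `E_i = ∑ⱼ a_{ij} xⱼ ∂ⱼ` as an element of `ℂ[x,∂]`,
where `x_j = X (Sum.inl j)` and `∂_j = X (Sum.inr j)`. -/
def eulerXD {d n : ℕ} (A : Matrix (Fin d) (Fin n) ℤ) (i : Fin d) :
    MvPolynomial (Fin n ⊕ Fin n) ℂ :=
  ∑ j, (A i j : MvPolynomial (Fin n ⊕ Fin n) ℂ) * X (Sum.inl j) * X (Sum.inr j)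

/-- The inclusion `ℂ[∂] → K[∂]`, for `K` an algebra over `ℂ[x₁,…,xₙ]`
(in practice `K = ℂ(x₁,…,xₙ)`), sending `∂ⱼ` to `∂ⱼ`. -/
def toFracPoly (n : ℕ) (K : Type) [CommRing K] [Algebra (MvPolynomial (Fin n) ℂ) K] :
    MvPolynomial (Fin n) ℂ →+* MvPolynomial (Fin n) K :=
  MvPolynomial.map ((algebraMap (MvPolynomial (Fin n) ℂ) K).comp (C : ℂ →+* _))

/-- The Euler operator `E_i = ∑ⱼ a_{ij} xⱼ ∂ⱼ` as an element of `K[∂]`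
(in practice `K = ℂ(x₁,…,xₙ)`, and the `xⱼ` act as scalars). -/
def eulerFrac {d n : ℕ} (A : Matrix (Fin d) (Fin n) ℤ) (K : Type) [CommRing K]
    [Algebra (MvPolynomial (Fin n) ℂ) K] (i : Fin d) : MvPolynomial (Fin n) K :=
  ∑ j, C (algebraMap (MvPolynomial (Fin n) ℂ) K (X j)) *
    (A i j : MvPolynomial (Fin n) K) * X j

/-- The extension `in_L(I_A)·ℂ[x,∂]` of the initial ideal of the toric ideal to
`ℂ[x,∂]`, where `x_j = X (Sum.inl j)` and `∂_j = X (Sum.inr j)`. -/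
def grIdealXD {d n : ℕ} (A : Matrix (Fin d) (Fin n) ℤ) (L : Fin n → ℚ) :
    Ideal (MvPolynomial (Fin n ⊕ Fin n) ℂ) :=
  Ideal.map (rename (Sum.inr : Fin n → Fin n ⊕ Fin n)) (initialIdeal L (toricIdeal A))

/-- The extension `in_L(I_A)·K[∂]` of the initial ideal of the toric ideal to `K[∂]`
(in practice `K = ℂ(x₁,…,xₙ)`). -/
def grIdealFrac {d n : ℕ} (A : Matrix (Fin d) (Fin n) ℤ) (L : Fin n → ℚ) (K : Type)
    [CommRing K] [Algebra (MvPolynomial (Fin n) ℂ) K] : Ideal (MvPolynomial (Fin n) K) :=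
  Ideal.map (toFracPoly n K) (initialIdeal L (toricIdeal A))

/-! ### Depth of a local ring and flatness over a factorial ring of dimension two -/

/-- Mathlib has two models of `Ext`: the left derived functors of `Hom(-, N)`, and
`Abelian.Ext`, for which the theorem of Rees is available. Both are computed by a projective
resolution of `M`, so they vanish simultaneously. -/
lemma subsingleton_ext_iff {R : Type} [CommRing R] (M N : ModuleCat.{0} R) (n : ℕ) :
    Subsingleton (((Ext R (ModuleCat.{0} R) n).obj (Opposite.op M)).obj N) ↔
      Subsingleton (Abelian.Ext M N n) := by
  let P : ProjectiveResolution M := ProjectiveResolution.of M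
  rw [← ModuleCat.isZero_iff_subsingleton, (P.isoExt n N).isZero_iff,
    ← HomologicalComplex.exactAt_iff_isZero_homology]
  cases n with
  | zero =>
    rw [HomologicalComplex.exactAt_iff' _ 0 0 1 (by simp) (by simp),
      ShortComplex.moduleCat_exact_iff, Abelian.Ext.addEquiv₀.subsingleton_congr]
    -- the augmentation `P₀ ⟶ M`, with target `M` itself
    let π : P.complex.X 0 ⟶ M := P.π.f 0
    have hπ : P.complex.d 1 0 ≫ π = 0 := P.complex_d_comp_π_f_zero
    have hex : (ShortComplex.mk _ π hπ).Exact := P.exact₀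
    have hepi : Epi π := inferInstanceAs (Epi (P.π.f 0))
    constructor
    · intro h
      refine subsingleton_of_forall_eq 0 fun g => ?_
      obtain ⟨y, hy⟩ := h (π ≫ g) (by
        change P.complex.d 1 0 ≫ π ≫ g = 0
        rw [← Category.assoc, hπ, Limits.zero_comp])
      have hy' : P.complex.d 0 0 ≫ (show P.complex.X 0 ⟶ N from y) = π ≫ g := hy
      rw [P.complex.shape 0 0 (by simp), Limits.zero_comp] at hy'
      rw [← cancel_epi π, ← hy', Limits.comp_zero]
    · intro h x hx
      have : Epi (ShortComplex.mk _ π hπ).g := hepi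
      have hx' : P.complex.d 1 0 ≫ (show P.complex.X 0 ⟶ N from x) = 0 := hx
      have hg : hex.desc (show P.complex.X 0 ⟶ N from x) hx' = 0 :=
        h.elim _ _
      have h2 := hex.g_desc (show P.complex.X 0 ⟶ N from x) hx'
      rw [hg, Limits.comp_zero] at h2
      exact ⟨0, (map_zero _).trans h2⟩
  | succ n =>
    rw [HomologicalComplex.exactAt_iff' _ n (n+1) (n+2) (by simp) (by simp),
      ShortComplex.moduleCat_exact_iff]
    constructor
    · intro h
      refine subsingleton_of_forall_eq 0 fun α => ?_
      obtain ⟨f, hf, rfl⟩ := P.extMk_surjective α (n+2) rfl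
      rw [P.extMk_eq_zero_iff _ _ _ _ n rfl]
      exact h f hf
    · intro h x hx
      exact (P.extMk_eq_zero_iff (show P.complex.X (n+1) ⟶ N from x) (n+2) rfl hx n rfl).1
        (Subsingleton.elim _ _)

/-- Heights do not decrease under contraction along an integral extension, by incomparability. -/
lemma height_comap_ge {P R : Type} [CommRing P] [CommRing R] [Algebra P R]
    [Algebra.IsIntegral P R] (p : Ideal R) [p.IsPrime] :
    p.height ≤ (p.comap (algebraMap P R)).height := by
  have h := Order.height_le_height_apply_of_strictMono (PrimeSpectrum.comap (algebraMap P R))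
    (fun I J h => Ideal.IsIntegral.comap_lt_comap h) ⟨p, inferInstance⟩
  rwa [← PrimeSpectrum.height_eq_orderHeight, ← PrimeSpectrum.height_eq_orderHeight] at h

open RingTheory.Sequence in
/-- A regular sequence of length `dim R` in the maximal ideal computes the depth: by the theorem
of Rees the depth is the maximal length of such a sequence, and each regular element lowers the
dimension by one. -/
lemma ringDepth_eq_of_isRegular {R : Type} [CommRing R] [IsLocalRing R] [IsNoetherianRing R]
    (rs : List R) (hrs : IsRegular R rs)
    (hm : ∀ r ∈ rs, r ∈ IsLocalRing.maximalIdeal R)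
    (hd : ringKrullDim R = rs.length) : ringDepth R = rs.length := by
  set m := IsLocalRing.maximalIdeal R
  -- the theorem of Rees
  have key (n : ℕ) : (∀ i < n, ¬ Nontrivial (((Ext R (ModuleCat.{0} R) i).obj
        (Opposite.op (ModuleCat.of R (R ⧸ m)))).obj (ModuleCat.of R R))) ↔
      ∃ rs : List R, rs.length = n ∧ (∀ r ∈ rs, r ∈ m) ∧ IsRegular R rs := by
    simp only [not_nontrivial_iff_subsingleton, subsingleton_ext_iff]
    have hlt : m • (⊤ : Submodule R (ModuleCat.of R R)) < ⊤ := by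
      have : m • (⊤ : Submodule R R) < ⊤ := by
        simpa using (IsLocalRing.maximalIdeal.isMaximal R).ne_top.lt_top
      exact this
    have T := ModuleCat.exists_isRegular_tfae m n (ModuleCat.of R R) hlt
    have hs : Module.support R (R ⧸ m) = PrimeSpectrum.zeroLocus m := by
      rw [Module.support_eq_zeroLocus, Ideal.annihilator_quotient]
    have T₁ : _ ↔ _ := T.out 0 3
    have T₂ : _ ↔ _ := T.out 2 0
    refine Iff.trans ⟨fun h => ?_, fun h => ?_⟩ T₁
    · exact T₂.1 ⟨ModuleCat.of R (R ⧸ m), inferInstanceAs (Nontrivial (R ⧸ m)),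
        inferInstanceAs (Module.Finite R (R ⧸ m)), hs, h⟩
    · exact h _ (inferInstanceAs (Nontrivial (R ⧸ m)))
        (inferInstanceAs (Module.Finite R (R ⧸ m))) hs.subset
  apply le_antisymm
  · have h := mt (key (rs.length + 1)).1 (by
      rintro ⟨rs', hl, -, hr⟩
      have := ringKrullDim_add_length_eq_ringKrullDim_of_isRegular rs' hr
      have hn : Nontrivial (R ⧸ Ideal.ofList rs') := by
        apply Ideal.Quotient.nontrivial_iff.2
        intro h
        apply hr.2
        simp [h]
      have h0 : 0 ≤ ringKrullDim (R ⧸ Ideal.ofList rs') := ringKrullDim_nonneg_of_nontrivial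
      rw [hd, hl] at this
      have h2 : ((rs.length + 1 : ℕ) : WithBot ℕ∞) ≤ (rs.length : ℕ) := by
        rw [← this]; exact le_add_of_nonneg_left h0
      have h3 : rs.length + 1 ≤ rs.length := by exact_mod_cast h2
      omega)
    push Not at h
    obtain ⟨i, hi, hN⟩ := h
    refine le_trans (b := (i : ℕ∞)) (sInf_le ?_) (by exact_mod_cast Nat.lt_succ_iff.1 hi)
    exact ⟨i, rfl, hN⟩
  · refine le_sInf ?_
    rintro _ ⟨i, rfl, hN⟩
    by_contra! hlt
    exact (key rs.length).2 ⟨rs, rfl, hm, hrs⟩ i (by exact_mod_cast hlt) hN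

open RingTheory.Sequence in
/-- In a factorial domain of dimension at most two, a nonzero prime `q` contains a prime element
`f`; if `q ≠ (f)`, any `g ∈ q` outside `(f)` extends it to a regular sequence. -/
lemma exists_weaklyRegular {P : Type} [CommRing P] [IsDomain P] [UniqueFactorizationMonoid P]
    [IsNoetherianRing P] (hP : ringKrullDim P ≤ 2) (q : Ideal P) [q.IsPrime] :
    ∃ rs : List P, IsWeaklyRegular P rs ∧ (∀ r ∈ rs, r ∈ q) ∧ q.height ≤ rs.length := by
  by_cases h0 : q = ⊥
  · exact ⟨[], by simp, by simp, by simp [h0]⟩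
  obtain ⟨f, hfq, hf⟩ := Ideal.IsPrime.exists_mem_prime_of_ne_bot ‹_› h0
  have hreg : IsSMulRegular P f := (IsRegular.of_ne_zero hf.ne_zero).left.isSMulRegular
  by_cases h1 : q = Ideal.span {f}
  · refine ⟨[f], by simpa, by simpa, ?_⟩
    simpa [h1] using Ideal.height_span_singleton_le_one hf.not_isUnit
  obtain ⟨g, hgq, hg⟩ : ∃ g ∈ q, g ∉ Ideal.span {f} := by
    by_contra! h
    exact h1 (le_antisymm h ((Ideal.span_singleton_le_iff_mem _).2 hfq))
  refine ⟨[f, g], ?_, by simp [hfq, hgq], ?_⟩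
  · simp only [isWeaklyRegular_cons_iff, IsWeaklyRegular.nil, and_true]
    refine ⟨hreg, ?_⟩
    refine (isSMulRegular_quotient_iff_mem_of_smul_mem _ g).2 fun x hx => ?_
    rw [Submodule.mem_smul_pointwise_iff_exists] at hx ⊢
    obtain ⟨y, -, hy⟩ := hx
    rw [Ideal.mem_span_singleton] at hg
    obtain ⟨z, hz⟩ := (hf.dvd_or_dvd (Dvd.intro y hy)).resolve_left hg
    exact ⟨z, trivial, hz.symm⟩
  · have := (Ideal.height_le_ringKrullDim_of_ne_top (Ideal.IsPrime.ne_top ‹q.IsPrime›)).trans hP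
    have h2 : q.height ≤ 2 := WithBot.coe_le_coe.1 this
    simpa using h2

/-- A finite flat algebra over a factorial domain of dimension at most two is Cohen–Macaulay:
the regular sequence in the contraction of `p` stays regular in `R_p`, and is long enough because
`height p ≤ height (p ∩ P)`. -/
theorem isCohenMacaulayRing_of_flat {P R : Type} [CommRing P] [IsDomain P]
    [UniqueFactorizationMonoid P]
    [IsNoetherianRing P] (hP : ringKrullDim P ≤ 2) [CommRing R] [Algebra P R] [Module.Finite P R]
    [Module.Flat P R] : IsCohenMacaulayRing R := by
  intro p _
  have : IsNoetherianRing R := IsNoetherianRing.of_finite P R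
  obtain ⟨rs, hrs, hmem, hh⟩ := exists_weaklyRegular hP (p.comap (algebraMap P R))
  have h1 := hrs.of_flat (S := R)
  have h2 := h1.isRegular_of_isLocalization_of_mem (Localization.AtPrime p) p (by
    simpa using hmem)
  have hl : ringKrullDim (Localization.AtPrime p) ≤
      ((rs.map (algebraMap P R)).map (algebraMap R (Localization.AtPrime p))).length := by
    rw [IsLocalization.AtPrime.ringKrullDim_eq_height p]
    simpa using (by exact_mod_cast (height_comap_ge (P := P) p).trans hh :
      (p.height : WithBot ℕ∞) ≤ rs.length)
  have hg := ringKrullDim_add_length_eq_ringKrullDim_of_isRegular _ h2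
  have hd := hl.antisymm (by
    rw [← hg]
    refine le_add_of_nonneg_left ?_
    have hn : Nontrivial (Localization.AtPrime p ⧸ Ideal.ofList
        ((rs.map (algebraMap P R)).map (algebraMap R (Localization.AtPrime p)))) := by
      apply Ideal.Quotient.nontrivial_iff.2
      intro h
      apply h2.2
      rw [h]
      simp
    exact ringKrullDim_nonneg_of_nontrivial)
  rw [hd, ringDepth_eq_of_isRegular _ h2 ?_ hd]
  · simp
  · simp only [List.map_map, List.mem_map, Function.comp]
    rintro _ ⟨a, ha, rfl⟩
    exact (IsLocalization.AtPrime.to_map_mem_maximal_iff _ p _).2 <| hmem a ha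

/-- The version of `isCohenMacaulayRing_of_flat` for a ring that is free over `P` with basis
`1, x, y`. -/
theorem isCohenMacaulayRing_of_ringHom {P R : Type} [CommRing P] [IsDomain P]
    [UniqueFactorizationMonoid P] [IsNoetherianRing P] (hP : ringKrullDim P ≤ 2) [CommRing R]
    (f : P →+* R) (x y : R) (hli : ∀ p0 p1 p2, f p0 + f p1 * x + f p2 * y = 0 →
      p0 = 0 ∧ p1 = 0 ∧ p2 = 0)
    (hsp : ∀ r, ∃ p0 p1 p2, r = f p0 + f p1 * x + f p2 * y) : IsCohenMacaulayRing R := by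
  let := f.toAlgebra
  have hsm (p : P) (r : R) : p • r = f p * r := Algebra.smul_def p r
  let v : Fin 3 → R := ![1, x, y]
  have hli' : LinearIndependent P v := by
    refine Fintype.linearIndependent_iff.2 fun g hg => ?_
    simp only [Fin.sum_univ_three, hsm, v] at hg
    obtain ⟨h0, h1, h2⟩ := hli (g 0) (g 1) (g 2) (by simpa using hg)
    intro i
    fin_cases i <;> assumption
  have hsp' : ⊤ ≤ Submodule.span P (Set.range v) := by
    rintro r -
    obtain ⟨p0, p1, p2, rfl⟩ := hsp r
    refine (Submodule.mem_span_range_iff_exists_fun _).2 ⟨![p0, p1, p2], ?_⟩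
    simp [Fin.sum_univ_three, hsm, v]
  let b := Module.Basis.mk hli' hsp'
  have : Module.Free P R := Module.Free.of_basis b
  have : Module.Finite P R := Module.Finite.of_basis b
  exact isCohenMacaulayRing_of_flat hP

/-! ### The toric ideal -/

/-- The matrix whose columns are `(0,1), (1,2), (2,2), (3,0)`. -/
abbrev matA : Matrix (Fin 2) (Fin 4) ℤ := !![0, 1, 2, 3; 1, 2, 2, 0]

lemma mulVec_matA_eq_iff (u v : Fin 4 →₀ ℕ) :
    matA.mulVec (fun j => (u j : ℤ)) = matA.mulVec (fun j => (v j : ℤ)) ↔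
      u 1 + 2 * u 2 + 3 * u 3 = v 1 + 2 * v 2 + 3 * v 3 ∧
        u 0 + 2 * u 1 + 2 * u 2 = v 0 + 2 * v 1 + 2 * v 2 := by
  rw [funext_iff, Fin.forall_fin_two]
  simp [Matrix.mulVec, dotProduct, Fin.sum_univ_four]
  omega

lemma monomial_fin_four (w : Fin 4 →₀ ℕ) :
    (monomial w 1 : MvPolynomial (Fin 4) ℂ) = X 0 ^ w 0 * X 1 ^ w 1 * X 2 ^ w 2 * X 3 ^ w 3 := by
  rw [monomial_eq, Finsupp.prod_fintype _ _ (by simp)]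
  simp [Fin.prod_univ_four]

lemma binomial_mem_toricIdeal (u v : Fin 4 → ℕ)
    (h₁ : u 1 + 2 * u 2 + 3 * u 3 = v 1 + 2 * v 2 + 3 * v 3)
    (h₂ : u 0 + 2 * u 1 + 2 * u 2 = v 0 + 2 * v 1 + 2 * v 2) :
    (X 0 ^ u 0 * X 1 ^ u 1 * X 2 ^ u 2 * X 3 ^ u 3 -
      X 0 ^ v 0 * X 1 ^ v 1 * X 2 ^ v 2 * X 3 ^ v 3 : MvPolynomial (Fin 4) ℂ) ∈
        toricIdeal matA := by
  refine Ideal.subset_span ⟨Finsupp.equivFunOnFinite.symm u, Finsupp.equivFunOnFinite.symm v,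
    ?_, ?_⟩
  · rw [mulVec_matA_eq_iff]
    exact ⟨h₁, h₂⟩
  · rw [monomial_fin_four, monomial_fin_four]
    rfl

/-- A ring homomorphism out of `ℂ[∂]` that takes equal values on monomials of equal `A`-degree
kills the toric ideal. -/
lemma toricIdeal_le_ker {B : Type} [CommRing B] (φ : MvPolynomial (Fin 4) ℂ →+* B)
    (h : ∀ u v : Fin 4 →₀ ℕ, u 1 + 2 * u 2 + 3 * u 3 = v 1 + 2 * v 2 + 3 * v 3 →
      u 0 + 2 * u 1 + 2 * u 2 = v 0 + 2 * v 1 + 2 * v 2 →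
        φ (monomial u 1) = φ (monomial v 1)) :
    toricIdeal matA ≤ RingHom.ker φ := by
  refine Ideal.span_le.2 ?_
  rintro _ ⟨u, v, huv, rfl⟩
  rw [mulVec_matA_eq_iff] at huv
  simp [RingHom.mem_ker, h u v huv.1 huv.2]

/-! ### The toric ring is free of rank three over `ℂ[a, d]` -/

open Polynomial in
/-- In `P[ρ]` with `ρ ^ 3 = e`, the elements `1`, `ρ t ^ 2`, `ρ ^ 2 t ^ 2` are linearly independent
over `P`, since no nonzero polynomial of degree at most two is divisible by the monic cubic
`X ^ 3 - e`. -/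
lemma linInd_aux (P : Type) [CommRing P] [IsDomain P] (t e p0 p1 p2 : P) (ht : t ≠ 0)
    (h : AdjoinRoot.of (Polynomial.X ^ 3 - Polynomial.C e : P[X]) p0 +
      AdjoinRoot.of _ p1 * (AdjoinRoot.root _ * AdjoinRoot.of _ t ^ 2) +
      AdjoinRoot.of _ p2 * (AdjoinRoot.root _ ^ 2 * AdjoinRoot.of _ t ^ 2) = 0) :
    p0 = 0 ∧ p1 = 0 ∧ p2 = 0 := by
  set q : P[X] := Polynomial.C (p2 * t ^ 2) * Polynomial.X ^ 2 +
    Polynomial.C (p1 * t ^ 2) * Polynomial.X + Polynomial.C p0 with hq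
  have hq0 : q = 0 := by
    by_contra hne
    refine (Polynomial.monic_X_pow_sub_C e (n := 3) (by norm_num)).not_dvd_of_natDegree_lt hne ?_
      (AdjoinRoot.mk_eq_zero.1 ?_)
    · rw [Polynomial.natDegree_X_pow_sub_C]
      exact Nat.lt_succ_of_le Polynomial.natDegree_quadratic_le
    · rw [← h, hq]
      simp only [map_add, map_mul, map_pow, AdjoinRoot.mk_C, AdjoinRoot.mk_X]
      ring
  refine ⟨?_, ?_, ?_⟩
  · simpa [hq] using congrArg (fun r => Polynomial.coeff r 0) hq0
  · have := congrArg (fun r => Polynomial.coeff r 1) hq0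
    simp only [hq, Polynomial.coeff_add, Polynomial.coeff_C_mul, Polynomial.coeff_X_pow,
      Polynomial.coeff_X, Polynomial.coeff_C] at this
    simpa [ht] using this
  · have := congrArg (fun r => Polynomial.coeff r 2) hq0
    simp only [hq, Polynomial.coeff_add, Polynomial.coeff_C_mul, Polynomial.coeff_X_pow,
      Polynomial.coeff_X, Polynomial.coeff_C] at this
    simpa [ht] using this

/-- The toric ring `ℂ[∂] / I_A`. -/
abbrev RA : Type := MvPolynomial (Fin 4) ℂ ⧸ toricIdeal matA

/-- The map `ℂ[a, d] → ℂ[∂] / I_A` sending the two variables to the classes of `∂₁`, `∂₄`. -/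
abbrev toRA : MvPolynomial (Fin 2) ℂ →ₐ[ℂ] RA :=
  aeval ![Ideal.Quotient.mk _ (X 0), Ideal.Quotient.mk _ (X 3)]

/-- The ring `ℂ[a, d][ρ] / (ρ ^ 3 - d)`, a copy of `ℂ[t₁, t₂]` with `t₁ = ρ` and `t₂ = a`,
presented as a `ℂ[a, d]`-algebra with `a = t₂` and `d = t₁ ^ 3`. -/
abbrev Tw : Type := AdjoinRoot
  (Polynomial.X ^ 3 - Polynomial.C (X 1) : Polynomial (MvPolynomial (Fin 2) ℂ))

/-- The adjoined cube root `ρ` of `d`. -/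
def rt : Tw := AdjoinRoot.root _

/-- The structure map `ℂ[a, d] → Tw`. -/
def ofT : MvPolynomial (Fin 2) ℂ →+* Tw := AdjoinRoot.of _

lemma rt_pow : rt ^ 3 = ofT (X 1) := by
  have := AdjoinRoot.mk_self
    (f := (Polynomial.X ^ 3 - Polynomial.C (X 1) : Polynomial (MvPolynomial (Fin 2) ℂ)))
  rw [map_sub, sub_eq_zero, map_pow, AdjoinRoot.mk_X, AdjoinRoot.mk_C] at this
  exact this

/-- The monomial parametrization `∂_j ↦ t ^ (a_j)` of the toric ring. -/
def phi : MvPolynomial (Fin 4) ℂ →+* Tw :=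
  eval₂Hom (ofT.comp C) ![ofT (X 0), rt * ofT (X 0) ^ 2, rt ^ 2 * ofT (X 0) ^ 2, rt ^ 3]

lemma phi_monomial (u : Fin 4 →₀ ℕ) : phi (monomial u 1) =
    ofT (X 0) ^ (u 0 + 2 * u 1 + 2 * u 2) * rt ^ (u 1 + 2 * u 2 + 3 * u 3) := by
  rw [monomial_fin_four]
  simp only [phi, map_mul, map_pow, coe_eval₂Hom, eval₂_X]
  simp
  ring

/-- The map induced by `phi` on the toric ring. -/
def phiBar : RA →+* Tw := Ideal.Quotient.lift _ phi (toricIdeal_le_ker phi fun u v h₁ h₂ => by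
  rw [phi_monomial, phi_monomial, h₁, h₂])

lemma phiBar_toRA (p : MvPolynomial (Fin 2) ℂ) : phiBar (toRA p) = ofT p := by
  have : phiBar.comp (toRA : MvPolynomial (Fin 2) ℂ →+* RA) = ofT := by
    apply MvPolynomial.ringHom_ext
    · intro r
      simp only [RingHom.comp_apply, RingHom.coe_coe]
      rw [← algebraMap_eq, AlgHom.commutes]
      change phi (C r) = _
      simp [phi]
    · intro i
      fin_cases i
      · simp [phiBar, phi]
      · simp [phiBar, phi, rt_pow]
  exact congrArg (fun f : MvPolynomial (Fin 2) ℂ →+* Tw => f p) this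

lemma toRA_rel (p0 p1 p2 : MvPolynomial (Fin 2) ℂ)
    (h : toRA p0 + toRA p1 * Ideal.Quotient.mk _ (X 1) + toRA p2 * Ideal.Quotient.mk _ (X 2) = 0) :
    p0 = 0 ∧ p1 = 0 ∧ p2 = 0 := by
  have := congrArg phiBar h
  simp only [map_add, map_mul, phiBar_toRA, map_zero] at this
  refine linInd_aux _ (X 0) (X 1) p0 p1 p2 (X_ne_zero _) ?_
  simpa [phiBar, phi, ofT, rt] using this

lemma toRA_span (x : RA) : ∃ p0 p1 p2 : MvPolynomial (Fin 2) ℂ,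
    x = toRA p0 + toRA p1 * Ideal.Quotient.mk _ (X 1) + toRA p2 * Ideal.Quotient.mk _ (X 2) := by
  obtain ⟨f, rfl⟩ := Ideal.Quotient.mk_surjective x
  have e0 : toRA (X 0) = Ideal.Quotient.mk _ (X 0) := by simp
  have e3 : toRA (X 1) = Ideal.Quotient.mk _ (X 3) := by simp
  have hrel (u v : Fin 4 → ℕ) h₁ h₂ :=
    Ideal.Quotient.eq.2 (binomial_mem_toricIdeal u v h₁ h₂)
  -- the products of `b` and `c`: `b² = a²c`, `bc = a⁴d`, `c² = a²bd`
  have hb := hrel ![0, 2, 0, 0] ![2, 0, 1, 0] (by simp) (by simp)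
  have hbc := hrel ![0, 1, 1, 0] ![4, 0, 0, 1] (by simp) (by simp)
  have hc := hrel ![0, 0, 2, 0] ![2, 1, 0, 1] (by simp) (by simp)
  simp at hb hbc hc
  induction f using MvPolynomial.induction_on with
  | C r =>
    refine ⟨C r, 0, 0, ?_⟩
    rw [← algebraMap_eq (R := ℂ) (σ := Fin 2), AlgHom.commutes]
    simp
    rfl
  | add f g hf hg =>
    obtain ⟨p0, p1, p2, hf⟩ := hf
    obtain ⟨q0, q1, q2, hg⟩ := hg
    refine ⟨p0 + q0, p1 + q1, p2 + q2, ?_⟩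
    rw [map_add, hf, hg]
    simp only [map_add]
    ring
  | mul_X f i hf =>
    obtain ⟨p0, p1, p2, hf⟩ := hf
    rw [map_mul, hf]
    fin_cases i
    · refine ⟨p0 * X 0, p1 * X 0, p2 * X 0, ?_⟩
      simp only [map_mul, e0, Fin.zero_eta]
      ring
    · refine ⟨p2 * X 0 ^ 4 * X 1, p0, p1 * X 0 ^ 2, ?_⟩
      simp only [map_mul, map_pow, e0, e3, Fin.mk_one]
      linear_combination toRA p1 * hb + toRA p2 * hbc
    · refine ⟨p1 * X 0 ^ 4 * X 1, p2 * X 0 ^ 2 * X 1, p0, ?_⟩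
      simp only [map_mul, map_pow, e0, e3, Fin.reduceFinMk]
      linear_combination toRA p1 * hbc + toRA p2 * hc
    · refine ⟨p0 * X 1, p1 * X 1, p2 * X 1, ?_⟩
      simp only [map_mul, e3, Fin.reduceFinMk]
      ring

theorem isCM_RA : IsCohenMacaulayRing RA :=
  isCohenMacaulayRing_of_ringHom (by
    rw [MvPolynomial.ringKrullDim_of_isNoetherianRing]
    simp [ringKrullDim_eq_zero_of_field]) toRA.toRingHom _ _ toRA_rel toRA_span

/-! ### The initial ideal -/

/-- The initial ideal of `I_A` with respect to total degree. -/
abbrev in1 : Ideal (MvPolynomial (Fin 4) ℂ) := initialIdeal (fun _ => 1) (toricIdeal matA)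

lemma wt_one_le_iff (u v : Fin 4 →₀ ℕ) : wt (fun _ => 1) u ≤ wt (fun _ => 1) v ↔
    u 0 + u 1 + u 2 + u 3 ≤ v 0 + v 1 + v 2 + v 3 := by
  simp only [wt, Fin.sum_univ_four, one_mul]
  exact_mod_cast Iff.rfl

open Classical in
lemma coeff_initialForm {n : ℕ} (L : Fin n → ℚ) (f : MvPolynomial (Fin n) ℂ) (w : Fin n →₀ ℕ) :
    (initialForm L f).coeff w =
      if ∀ v ∈ f.support, wt L v ≤ wt L w then f.coeff w else 0 := by
  simp only [initialForm, coeff_sum, coeff_monomial]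
  rw [Finset.sum_ite_eq']
  simp only [Finset.mem_filter, mem_support_iff]
  split_ifs <;> simp_all

/-- The monomial of larger total degree in a binomial of `I_A` is an initial form. -/
lemma monomial_mem_in1 (u v : Fin 4 → ℕ)
    (h₁ : u 1 + 2 * u 2 + 3 * u 3 = v 1 + 2 * v 2 + 3 * v 3)
    (h₂ : u 0 + 2 * u 1 + 2 * u 2 = v 0 + 2 * v 1 + 2 * v 2)
    (hlt : v 0 + v 1 + v 2 + v 3 < u 0 + u 1 + u 2 + u 3) :
    (X 0 ^ u 0 * X 1 ^ u 1 * X 2 ^ u 2 * X 3 ^ u 3 : MvPolynomial (Fin 4) ℂ) ∈ in1 := by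
  classical
  have hm := binomial_mem_toricIdeal u v h₁ h₂
  set u' := Finsupp.equivFunOnFinite.symm u
  set v' := Finsupp.equivFunOnFinite.symm v
  have eu : (X 0 ^ u 0 * X 1 ^ u 1 * X 2 ^ u 2 * X 3 ^ u 3 : MvPolynomial (Fin 4) ℂ) =
    monomial u' 1 := (monomial_fin_four u').symm
  have ev : (X 0 ^ v 0 * X 1 ^ v 1 * X 2 ^ v 2 * X 3 ^ v 3 : MvPolynomial (Fin 4) ℂ) =
    monomial v' 1 := (monomial_fin_four v').symm
  rw [eu, ev] at hm
  rw [eu]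
  have hne : v' ≠ u' := by
    intro h
    have : v = u := Finsupp.equivFunOnFinite.symm.injective h
    subst this
    omega
  have hcu : (monomial u' 1 - monomial v' 1 : MvPolynomial (Fin 4) ℂ).coeff u' = 1 := by
    simp [hne]
  refine Ideal.subset_span ⟨_, hm, fun h => by simp [h] at hcu, ?_⟩
  ext w
  have hle : wt (fun _ => 1) v' ≤ wt (fun _ => 1) u' := (wt_one_le_iff _ _).2 hlt.le
  have hnle : ¬ wt (fun _ => 1) u' ≤ wt (fun _ => 1) v' := fun h =>
    absurd ((wt_one_le_iff _ _).1 h) hlt.not_ge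
  rw [coeff_initialForm, coeff_monomial]
  have hsup : ∀ x ∈ (monomial u' 1 - monomial v' 1 : MvPolynomial (Fin 4) ℂ).support,
      x = u' ∨ x = v' := by
    intro x hx
    by_contra! hc
    simp [mem_support_iff, coeff_monomial, hc.1.symm, hc.2.symm] at hx
  split_ifs with hw hmax hmax
  · subst hw; exact hcu.symm
  · subst hw
    exfalso
    apply hmax
    intro x hx
    rcases hsup x hx with rfl | rfl
    · exact le_rfl
    · exact hle
  · by_cases hv : v' = w
    · subst hv
      exact absurd (hmax u' (by rw [mem_support_iff, hcu]; exact one_ne_zero)) hnle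
    · simp [coeff_monomial, hw, hv]
  · rfl

/-- The parametrization `∂_j ↦ t ^ (a_j)`, with values in `ℂ[t₁, t₂]`. -/
def degA : MvPolynomial (Fin 4) ℂ →+* MvPolynomial (Fin 2) ℂ :=
  eval₂Hom C ![X 1, X 0 * X 1 ^ 2, X 0 ^ 2 * X 1 ^ 2, X 0 ^ 3]

/-- The `A`-degree `Au` of the monomial `∂ ^ u`. -/
def expA (u : Fin 4 →₀ ℕ) : Fin 2 →₀ ℕ :=
  Finsupp.single 0 (u 1 + 2 * u 2 + 3 * u 3) + Finsupp.single 1 (u 0 + 2 * u 1 + 2 * u 2)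

lemma expA_eq_iff (u v : Fin 4 →₀ ℕ) : expA u = expA v ↔
    u 1 + 2 * u 2 + 3 * u 3 = v 1 + 2 * v 2 + 3 * v 3 ∧
        u 0 + 2 * u 1 + 2 * u 2 = v 0 + 2 * v 1 + 2 * v 2 := by
  constructor
  · intro h
    constructor
    · simpa [expA] using DFunLike.congr_fun h 0
    · simpa [expA] using DFunLike.congr_fun h 1
  · rintro ⟨h₁, h₂⟩
    rw [expA, expA, h₁, h₂]

lemma degA_monomial (u : Fin 4 →₀ ℕ) (c : ℂ) : degA (monomial u c) = monomial (expA u) c := by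
  have h1 : (monomial u c : MvPolynomial (Fin 4) ℂ) = C c * monomial u 1 := by simp [C_mul_monomial]
  have h2 : (monomial (expA u) c : MvPolynomial (Fin 2) ℂ) = C c * monomial (expA u) 1 := by
    simp [C_mul_monomial]
  rw [h1, h2, map_mul, show degA (C c) = C c by simp [degA], monomial_fin_four, monomial_eq, Finsupp.prod_fintype _ _ (by simp)]
  congr 1
  simp only [degA, expA, map_mul, map_pow, coe_eval₂Hom, eval₂_X]
  simp [Fin.prod_univ_two]
  ring

/-- No term of an element of `I_A` is alone in its `A`-degree, since otherwise its image under
`degA` could not cancel. -/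
lemma exists_ne_mem_support {f : MvPolynomial (Fin 4) ℂ} (hf : f ∈ toricIdeal matA)
    {w : Fin 4 →₀ ℕ} (hw : w ∈ f.support) : ∃ v ∈ f.support, v ≠ w ∧ expA v = expA w := by
  classical
  have h0 : degA f = 0 := toricIdeal_le_ker degA (fun u v h₁ h₂ => by
    rw [degA_monomial, degA_monomial, (expA_eq_iff u v).2 ⟨h₁, h₂⟩]) hf
  by_contra! hcon
  have : (degA f).coeff (expA w) = f.coeff w := by
    conv_lhs => rw [f.as_sum]
    simp only [map_sum, degA_monomial, coeff_sum, coeff_monomial]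
    rw [Finset.sum_eq_single w]
    · simp
    · intro v hv hvw
      simp [hcon v hv hvw]
    · intro h; exact absurd hw h
  rw [h0, coeff_zero] at this
  exact mem_support_iff.1 hw this.symm

/-- An ideal contains `in(I_A)` as soon as it contains every monomial `∂ ^ w` that is not the
unique monomial of minimal total degree in its `A`-degree. -/
lemma in1_le {K : Ideal (MvPolynomial (Fin 4) ℂ)}
    (hK : ∀ w v : Fin 4 →₀ ℕ, v ≠ w → expA v = expA w →
      v 0 + v 1 + v 2 + v 3 ≤ w 0 + w 1 + w 2 + w 3 → (monomial w 1 : MvPolynomial (Fin 4) ℂ) ∈ K) :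
    in1 ≤ K := by
  refine Ideal.span_le.2 ?_
  rintro _ ⟨f, hf, -, rfl⟩
  refine Ideal.sum_mem _ fun w hw => ?_
  obtain ⟨hw, hmax⟩ := Finset.mem_filter.1 hw
  obtain ⟨v, hv, hne, he⟩ := exists_ne_mem_support hf hw
  have := hK w v hne he ((wt_one_le_iff v w).1 (hmax v hv))
  have h1 : (monomial w (f.coeff w) : MvPolynomial (Fin 4) ℂ) =
      C (f.coeff w) * monomial w 1 := by
    simp [C_mul_monomial]
  rw [h1]
  exact K.mul_mem_left _ this

/-- The monomials `c ^ i d ^ j` are the unique ones of minimal total degree in their `A`-degree,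
whence `in(I_A) ⊆ (a, b)`. -/
lemma in1_le_span_X : in1 ≤ Ideal.span (X '' ({0, 1} : Set (Fin 4))) := by
  refine in1_le fun w v hne he hle => mem_ideal_span_X_image.2 fun m hm => ?_
  obtain rfl : m = w := by
    by_contra h
    exact mem_support_iff.1 hm (by rw [coeff_monomial, if_neg (Ne.symm h)])
  obtain ⟨h₁, h₂⟩ := (expA_eq_iff v m).1 he
  by_contra! hcon
  have h0 := hcon 0 (by simp)
  have h1 := hcon 1 (by simp)
  apply hne
  ext i
  fin_cases i <;> simp <;> omega

/-- The class of `a³d` modulo `in(I_A)` is nonzero after localizing at `(a, b, c)`. -/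
lemma mem_of_mul_mem_in1 {s : MvPolynomial (Fin 4) ℂ} (hs : s * (X 0 ^ 3 * X 3) ∈ in1) :
    s ∈ Ideal.span (X '' ({0, 1, 2} : Set (Fin 4)) : Set (MvPolynomial (Fin 4) ℂ)) := by
  classical
  -- the monomials `a ^ i d ^ j` with `i ≤ 3` are alone in their `A`-degree
  have hle : in1 ≤ Ideal.span ((fun s => monomial s (1 : ℂ)) ''
      {Finsupp.single 0 4, Finsupp.single 1 1, Finsupp.single 2 1}) := by
    refine in1_le fun w v hne he _ => mem_ideal_span_monomial_image.2 fun m hm => ?_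
    obtain rfl : m = w := by
      by_contra h
      exact mem_support_iff.1 hm (by rw [coeff_monomial, if_neg (Ne.symm h)])
    obtain ⟨h₁, h₂⟩ := (expA_eq_iff v m).1 he
    simp only [Set.mem_insert_iff, Set.mem_singleton_iff, exists_eq_or_imp, exists_eq_left,
      Finsupp.single_le_iff]
    by_contra! hcon
    apply hne
    ext i
    fin_cases i <;> simp <;> omega
  have hs' := mem_ideal_span_monomial_image.1 (hle hs)
  have hX : (X 0 ^ 3 * X 3 : MvPolynomial (Fin 4) ℂ) =
      monomial (Finsupp.single 0 3 + Finsupp.single 3 1) 1 := by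
    rw [monomial_fin_four]
    simp
  refine mem_ideal_span_X_image.2 fun m hm => ?_
  obtain ⟨x, hx, hxm⟩ := hs' (m + (Finsupp.single 0 3 + Finsupp.single 3 1)) (by
    rw [hX, mem_support_iff, coeff_mul_monomial, mul_one]
    exact mem_support_iff.1 hm)
  rcases hx with rfl | rfl | rfl <;> rw [Finsupp.single_le_iff] at hxm
  · refine ⟨0, by simp, ?_⟩
    simp at hxm
    omega
  · refine ⟨1, by simp, ?_⟩
    simp at hxm
    omega
  · refine ⟨2, by simp, ?_⟩
    simp at hxm
    omega

/-! ### The initial ideal is not Cohen–Macaulay -/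

/-- An ideal generated by variables is the kernel of the evaluation of these variables at zero. -/
lemma isPrime_span_X_image {σ : Type} (s : Set σ) :
    (Ideal.span (X '' s) : Ideal (MvPolynomial σ ℂ)).IsPrime := by
  classical
  let ev : MvPolynomial σ ℂ →ₐ[ℂ] MvPolynomial σ ℂ := aeval fun i => if i ∈ s then 0 else X i
  have h : (Ideal.Quotient.mkₐ ℂ (Ideal.span (X '' s))).comp ev =
      Ideal.Quotient.mkₐ ℂ (Ideal.span (X '' s)) := by
    refine MvPolynomial.algHom_ext fun i => ?_
    by_cases hi : i ∈ s
    · simp only [AlgHom.comp_apply, ev, aeval_X, if_pos hi, map_zero]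
      exact (Ideal.Quotient.eq_zero_iff_mem.2
        (Ideal.subset_span (Set.mem_image_of_mem X hi))).symm
    · simp [ev, hi]
  have hk : Ideal.span (X '' s) = RingHom.ker ev := by
    refine le_antisymm (Ideal.span_le.2 ?_) fun x hx => ?_
    · rintro _ ⟨i, hi, rfl⟩
      simp [ev, RingHom.mem_ker, hi]
    · have := DFunLike.congr_fun h x
      rw [AlgHom.comp_apply, (RingHom.mem_ker).1 hx, map_zero] at this
      exact Ideal.Quotient.eq_zero_iff_mem.1 this.symm
  rw [hk]
  exact RingHom.ker_isPrime _

/-- If a nonzero element of a local ring is killed by the maximal ideal, the depth is zero. -/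
lemma ringDepth_eq_zero {L : Type} [CommRing L] [IsLocalRing L] (z : L) (hz : z ≠ 0)
    (h : ∀ x ∈ IsLocalRing.maximalIdeal L, x * z = 0) : ringDepth L = 0 := by
  refine le_antisymm (sInf_le ⟨0, rfl, ?_⟩) bot_le
  rw [← not_subsingleton_iff_nontrivial, subsingleton_ext_iff,
    Abelian.Ext.addEquiv₀.subsingleton_congr]
  intro hsub
  let g : (L ⧸ IsLocalRing.maximalIdeal L) →ₗ[L] L :=
    Submodule.liftQ _ (LinearMap.toSpanSingleton L L z) fun x hx => by
      simpa using h x hx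
  have hg : ModuleCat.ofHom g = 0 := hsub.elim _ _
  apply hz
  have := congrArg (fun f => f.hom (Submodule.Quotient.mk 1)) hg
  calc z = g (Submodule.Quotient.mk 1) := by simp only [g, Submodule.liftQ_apply]; simp
    _ = 0 := this

/-- The ring `ℂ[∂] / in(I_A)`. -/
abbrev SJ : Type := MvPolynomial (Fin 4) ℂ ⧸ in1

/-- The localization at `(a, b, c)` has depth zero, but `(a, b)` survives as a smaller prime, so
its dimension is positive. -/
theorem not_isCM_SJ : ¬ IsCohenMacaulayRing SJ := by
  intro hCM
  set p : Ideal (MvPolynomial (Fin 4) ℂ) := Ideal.span (X '' ({0, 1, 2} : Set (Fin 4))) with hp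
  set q : Ideal (MvPolynomial (Fin 4) ℂ) := Ideal.span (X '' ({0, 1} : Set (Fin 4))) with hq
  have hpp : p.IsPrime := isPrime_span_X_image _
  have hqp : q.IsPrime := isPrime_span_X_image _
  have hJq : in1 ≤ q := in1_le_span_X
  have hqlep : q ≤ p := Ideal.span_mono (Set.image_mono (by grind))
  have hJp : in1 ≤ p := hJq.trans hqlep
  have hX2 : (X 2 : MvPolynomial (Fin 4) ℂ) ∉ q := by
    intro h
    obtain ⟨i, hi, h⟩ := mem_ideal_span_X_image.1 h (Finsupp.single 2 1) (by simp)
    rcases hi with rfl | rfl <;> simp at h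
  let p' : Ideal SJ := p.map (Ideal.Quotient.mk in1)
  let q' : Ideal SJ := q.map (Ideal.Quotient.mk in1)
  have hp' : p'.IsPrime := Ideal.isPrime_map_quotientMk_of_isPrime hJp
  have hq' : q'.IsPrime := Ideal.isPrime_map_quotientMk_of_isPrime hJq
  have memp (x) : Ideal.Quotient.mk in1 x ∈ p' ↔ x ∈ p := by
    rw [← Ideal.mem_comap, Ideal.comap_map_of_surjective _ Ideal.Quotient.mk_surjective,
      ← RingHom.ker_eq_comap_bot, Ideal.mk_ker, sup_eq_left.2 hJp]
  have memq (x) : Ideal.Quotient.mk in1 x ∈ q' ↔ x ∈ q := by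
    rw [← Ideal.mem_comap, Ideal.comap_map_of_surjective _ Ideal.Quotient.mk_surjective,
      ← RingHom.ker_eq_comap_bot, Ideal.mk_ker, sup_eq_left.2 hJq]
  have hlt : q' < p' := by
    refine lt_of_le_of_ne (Ideal.map_mono hqlep) fun h => hX2 ?_
    rw [← memq, h, memp]
    exact Ideal.subset_span ⟨2, by simp, rfl⟩
  let L := Localization.AtPrime p'
  -- the class of `a³d` spans a copy of the residue field: `a⁴d`, `a²bd`, `a²c` are initial forms
  let z : L := algebraMap SJ L (Ideal.Quotient.mk in1 (X 0 ^ 3 * X 3))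
  have hz : z ≠ 0 := by
    intro h
    obtain ⟨⟨s, hs⟩, hsz⟩ := (IsLocalization.map_eq_zero_iff p'.primeCompl L _).1 h
    obtain ⟨s, rfl⟩ := Ideal.Quotient.mk_surjective s
    refine hs ((memp s).2 (mem_of_mul_mem_in1 ?_))
    rw [← Ideal.Quotient.eq_zero_iff_mem, map_mul]
    exact hsz
  have hann : ∀ x ∈ IsLocalRing.maximalIdeal L, x * z = 0 := by
    have hle : IsLocalRing.maximalIdeal L ≤ (Ideal.span {z}).annihilator := by
      rw [← IsLocalization.AtPrime.map_eq_maximalIdeal p' L, Ideal.map_le_iff_le_comap,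
        Ideal.map_le_iff_le_comap, Ideal.span_le]
      have key (f : MvPolynomial (Fin 4) ℂ) (hf : f * (X 0 ^ 3 * X 3) ∈ in1) :
          f ∈ (((Ideal.span {z}).annihilator.comap (algebraMap SJ L)).comap
            (Ideal.Quotient.mk in1)) := by
        rw [Ideal.mem_comap, Ideal.mem_comap, Submodule.mem_annihilator_span_singleton,
          smul_eq_mul, ← map_mul, ← map_mul, Ideal.Quotient.eq_zero_iff_mem.2 hf, map_zero]
      rintro _ ⟨i, hi | hi | hi, rfl⟩
      · subst hi
        refine key _ ?_
        convert monomial_mem_in1 ![4, 0, 0, 1] ![0, 1, 1, 0] (by simp) (by simp) (by simp) using 1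
        simp
        ring
      · subst hi
        refine key _ ?_
        have := monomial_mem_in1 ![2, 1, 0, 1] ![0, 0, 2, 0] (by simp) (by simp) (by simp)
        convert in1.mul_mem_left (X 0) this using 1
        simp
        ring
      · have hi : i = 2 := hi
        subst hi
        refine key _ ?_
        have := monomial_mem_in1 ![2, 0, 1, 0] ![0, 2, 0, 0] (by simp) (by simp) (by simp)
        convert in1.mul_mem_left (X 0 * X 3) this using 1
        simp
        ring
    intro x hx
    exact (Submodule.mem_annihilator_span_singleton _ _).1 (hle hx)
  have h0 := hCM p'
  rw [ringDepth_eq_zero z hz hann, IsLocalization.AtPrime.ringKrullDim_eq_height p'] at h0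
  have h1 : p'.height = 0 := (WithBot.coe_injective h0).symm
  rw [Ideal.height_eq_zero_iff] at h1
  exact hlt.not_ge (h1.2 ⟨hq', bot_le⟩ hlt.le)

/-- Row 4 of the table in Example 7.6 (columns `(0,1),(1,2),(2,2),(3,0)`): `ℂ[∂]/I_A` is Cohen–Macaulay but `ℂ[∂]/in(I_A)` is not. -/
theorem stmt13 :
    IsCohenMacaulayRing (MvPolynomial (Fin 4) ℂ ⧸ toricIdeal (!![0, 1, 2, 3; 1, 2, 2, 0] : Matrix (Fin 2) (Fin 4) ℤ)) ∧
    ¬ IsCohenMacaulayRing (MvPolynomial (Fin 4) ℂ ⧸ initialIdeal (fun _ => 1) (toricIdeal (!![0, 1, 2, 3; 1, 2, 2, 0] : Matrix (Fin 2) (Fin 4) ℤ))) := by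
  exact ⟨isCM_RA, not_isCM_SJ⟩

end
end

section
/- Let A be the 2×5 integer matrix with columns a₁ = (1,3), a₂ = (2,1), a₃ = (3,3), a₄ = (4,2), a₅ = (5,0), and let I_A ⊆ ℂ[∂₁,…,∂₅] be its toric ideal. Then ℂ[∂₁,…,∂₅]/I_A is Cohen–Macaulay, but ℂ[∂₁,…,∂₅]/in(I_A) is not Cohen–Macaulay, where in(I_A) is the initial ideal of I_A with respect to total degree. -/
/-!
The two halves concern `ℂ[∂]/I_A` and `ℂ[∂]/in(I_A)` for the columns
`(1,3), (2,1), (3,3), (4,2), (5,0)`.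

**The toric ring is Cohen–Macaulay.** Modulo `I_A` one has `∂₄ = ∂₂²`, `∂₂³ = ∂₁∂₅` and
`∂₃⁵ = ∂₁⁵∂₅²`, so `ℂ[∂]/I_A` is spanned over `ℂ[∂₁, ∂₅]` by the fifteen monomials `∂₂^i ∂₃^j` with
`i < 3`, `j < 5`. The multidegrees of the monomials `∂₁^a ∂₅^b ∂₂^i ∂₃^j` are pairwise distinct, so
this is a basis (`isCohenMacaulayRing_of_surjective`). A flat integral algebra over a
polynomial ring in two variables is Cohen–Macaulay (`isCohenMacaulayRing_of_flat`): regular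
sequences in the contraction of a prime remain regular in the localization, and Rees' theorem (`rees`) identifies
their maximal length with the depth defined through `Ext`.

**The initial ring is not Cohen–Macaulay.** Let `p = (∂₁, ∂₂, ∂₄, ∂₅)` and `m = ∂₁²∂₂∂₄³`. Each
`∂ᵢ m` with `i ≠ 3` has a shorter monomial of the same multidegree, so `p m ⊆ in(I_A)`
(`X_mul_mem`). On the other hand `∂₃^k m` is a shortest monomial of its multidegree for every `k`.
Summing the coefficients over the shortest monomials of a fixed multidegree gives a linear
functional vanishing on `in(I_A)` (`coeff_param_initialIdeal`), and these functionals show that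
`g m ∉ in(I_A)` for `g ∉ p` (`mul_notMem`). Hence the localization at `p` has depth `0`. Its
dimension is positive, because `in(I_A)` is contained in the smaller prime `(∂₂, ∂₄, ∂₅)`
(`initialIdeal_le_qIdeal`).
-/

open MvPolynomial CategoryTheory

noncomputable section

namespace Row5

/-! ### Depth and regular sequences -/

section Homological
open CategoryTheory.Abelian CategoryTheory.Limits

/-- The `Ext` functor obtained by deriving `Hom(-, Y)` (with values in modules) and the `Ext` groups
of the abelian category vanish simultaneously: both are computed by a projective resolution. -/
theorem extLegacy_nontrivial_iff {S : Type} [CommRing S] (X Y : ModuleCat.{0} S) (n : ℕ) :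
    Nontrivial (((_root_.Ext S (ModuleCat.{0} S) n).obj (Opposite.op X)).obj Y) ↔
      Nontrivial (Abelian.Ext.{0} X Y n) := by
  let P := ProjectiveResolution.of X
  rw [← not_subsingleton_iff_nontrivial, ← not_subsingleton_iff_nontrivial, not_iff_not,
    ← ModuleCat.isZero_iff_subsingleton, (P.isoExt (R := S) n Y).isZero_iff,
    ← HomologicalComplex.exactAt_iff_isZero_homology]
  rcases n with _ | n
  · rw [HomologicalComplex.exactAt_iff' _ 0 0 1 (by simp) (by simp),
      ShortComplex.moduleCat_exact_iff]
    rw [Ext.homEquiv₀.subsingleton_congr]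
    obtain ⟨π, hπ, hepi, hdesc⟩ : ∃ π : P.complex.X 0 ⟶ X, P.complex.d 1 0 ≫ π = 0 ∧ Epi π ∧
        ∀ f : P.complex.X 0 ⟶ Y, P.complex.d 1 0 ≫ f = 0 → ∃ g : X ⟶ Y, π ≫ g = f :=
      ⟨P.π.f 0, P.complex_d_comp_π_f_zero, inferInstanceAs (Epi (P.π.f 0)),
        fun f hf ↦ ⟨P.exact₀.desc f hf, P.exact₀.g_desc f hf⟩⟩
    -- the differential into degree `0` vanishes
    have h0 (y : P.complex.X 0 ⟶ Y) : P.complex.d 0 0 ≫ y = 0 := by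
      rw [P.complex.shape 0 0 (by simp), zero_comp]
    constructor
    · intro h
      refine subsingleton_of_forall_eq 0 fun f ↦ ?_
      obtain ⟨y, hy⟩ := h (π ≫ f) (show P.complex.d 1 0 ≫ π ≫ f = 0 by
        rw [reassoc_of% hπ, zero_comp])
      have h1 : π ≫ f = 0 := hy.symm.trans (h0 y)
      exact (cancel_epi π).1 (h1.trans comp_zero.symm)
    · intro h f hf
      obtain ⟨g, hg⟩ := hdesc f hf
      have h2 : g = 0 := Subsingleton.elim _ _
      refine ⟨(0 : P.complex.X 0 ⟶ Y), (h0 0).trans ?_⟩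
      rw [← hg, h2, comp_zero]
  · rw [HomologicalComplex.exactAt_iff' _ n (n+1) (n+2) (by simp) (by simp),
      ShortComplex.moduleCat_exact_iff]
    constructor
    · intro h
      refine subsingleton_of_forall_eq 0 fun α ↦ ?_
      obtain ⟨f, hf, rfl⟩ := P.extMk_surjective α (n+2) rfl
      rw [P.extMk_eq_zero_iff f _ _ _ n rfl]
      exact h f hf
    · intro h f hf
      exact (P.extMk_eq_zero_iff f (n+2) rfl hf n rfl).1 (Subsingleton.elim _ _)

/-- Rees' theorem: if `rs` is a weakly `M`-regular sequence of length `n` annihilating `N`, then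
`Ext^i(N, M) = 0` for `i < n`, and `Ext^n(N, M) ≠ 0` as soon as `Hom(N, M/(rs)M) ≠ 0`. The proof is
by induction on `rs`, along the long exact sequence of `0 → M → M → M/xM → 0`. -/
theorem rees {S : Type} [CommRing S] (N : ModuleCat.{0} S) (rs : List S) :
    ∀ (M : Type) [AddCommGroup M] [Module S M],
      RingTheory.Sequence.IsWeaklyRegular M rs → (∀ r ∈ rs, r ∈ Module.annihilator S N) →
      (∀ i < rs.length, Subsingleton (Abelian.Ext.{0} N (ModuleCat.of S M) i)) ∧
      (Nontrivial (N →ₗ[S] (M ⧸ (Ideal.ofList rs • ⊤ : Submodule S M))) →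
        Nontrivial (Abelian.Ext.{0} N (ModuleCat.of S M) rs.length)) := by
  induction rs with
  | nil =>
    intro M _ _ _ _
    refine ⟨by simp, fun h ↦ ?_⟩
    have e : (M ⧸ (Ideal.ofList ([] : List S) • ⊤ : Submodule S M)) ≃ₗ[S] M :=
      Submodule.quotEquivOfEqBot _ (by simp)
    obtain ⟨f, hf⟩ := exists_ne (0 : N →ₗ[S] (M ⧸ (Ideal.ofList ([] : List S) • ⊤ : Submodule S M)))
    rw [List.length_nil, Ext.homEquiv₀.nontrivial_congr]
    refine ⟨ModuleCat.ofHom (e.toLinearMap ∘ₗ f), 0, fun h0 ↦ hf ?_⟩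
    ext x
    have := congrArg (fun g ↦ g.hom x) h0
    simpa using this
  | cons x rs ih =>
    intro M _ _ hreg hmem
    rw [RingTheory.Sequence.isWeaklyRegular_cons_iff] at hreg
    obtain ⟨hx, hrs⟩ := hreg
    obtain ⟨ih1, ih2⟩ := ih (QuotSMulTop x M) hrs fun r hr ↦ hmem r (List.mem_cons_of_mem _ hr)
    have hse : (ModuleCat.smulShortComplex (ModuleCat.of S M) x).ShortExact :=
      IsSMulRegular.smulShortComplex_shortExact (M := ModuleCat.of S M) hx
    have hmul (n : ℕ) (α : Abelian.Ext.{0} N (ModuleCat.of S M) n) :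
        α.comp (Ext.mk₀ (ModuleCat.smulShortComplex (ModuleCat.of S M) x).f) (add_zero n) = 0 := by
      have := Ext.postcomp_smul_id_eq_zero_of_mem_annihilator (M := ModuleCat.of S M)
        (hmem x List.mem_cons_self) n
      exact DFunLike.congr_fun (congrArg AddCommGrpCat.Hom.hom this) α
    have vanish : ∀ i < (x :: rs).length,
        Subsingleton (Abelian.Ext.{0} N (ModuleCat.of S M) i) := by
      intro i hi
      rcases i with _ | i
      · rw [Ext.homEquiv₀.subsingleton_congr]
        have := IsSMulRegular.linearMap_subsingleton_of_mem_annihilator (N := N) hx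
          (hmem x List.mem_cons_self)
        exact ⟨fun f g ↦ ModuleCat.hom_ext (this.elim f.hom g.hom)⟩
      · have := ih1 i (by simpa using hi)
        refine subsingleton_of_forall_eq 0 fun α ↦ ?_
        obtain ⟨β, hβ⟩ := Ext.covariant_sequence_exact₁ N hse α (hmul _ α) rfl
        have : β = 0 := this.elim _ _
        rw [← hβ, this, Ext.zero_comp]
        rfl
    refine ⟨vanish, fun h ↦ ?_⟩
    have h' : Nontrivial (N →ₗ[S] (QuotSMulTop x M ⧸
        (Ideal.ofList rs • ⊤ : Submodule S (QuotSMulTop x M)))) :=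
      (LinearEquiv.congrRight (M := N)
        (Submodule.quotOfListConsSMulTopEquivQuotSMulTopInner M x rs)).toEquiv.symm.nontrivial
    obtain ⟨β, hβ⟩ := @exists_ne _ (ih2 h') 0
    refine ⟨(β.comp hse.extClass rfl : Abelian.Ext.{0} N (ModuleCat.of S M) (rs.length + 1)), 0,
      fun h0 ↦ hβ ?_⟩
    obtain ⟨γ, hγ⟩ := Ext.covariant_sequence_exact₃ N hse β rfl h0
    have : γ = 0 := (vanish rs.length (by simp)).elim _ _
    rw [← hγ, this, Ext.zero_comp]
    rfl

/-- A Noetherian local ring with a regular sequence at least as long as its dimension satisfies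
`depth = dim`. -/
theorem ringDepth_eq {S : Type} [CommRing S] [IsLocalRing S] [IsNoetherianRing S] (rs : List S)
    (hreg : RingTheory.Sequence.IsRegular S rs) (hmem : ∀ r ∈ rs, r ∈ IsLocalRing.maximalIdeal S)
    (hdim : ringKrullDim S ≤ rs.length) :
    (ringDepth S : WithBot ℕ∞) = ringKrullDim S := by
  have hlen : ringKrullDim S = rs.length := by
    refine le_antisymm hdim ?_
    rw [← ringKrullDim_add_length_eq_ringKrullDim_of_isRegular rs hreg]
    have : Nontrivial (S ⧸ Ideal.ofList rs) :=
      Ideal.Quotient.nontrivial_iff.2 fun h ↦ hreg.2 (by simp [h])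
    exact le_add_of_nonneg_left ringKrullDim_nonneg_of_nontrivial
  have hann : ∀ r ∈ IsLocalRing.maximalIdeal S,
      r ∈ Module.annihilator S (S ⧸ IsLocalRing.maximalIdeal S) := by
    simp [Ideal.annihilator_quotient]
  obtain ⟨h1, h2⟩ := rees (ModuleCat.of S (S ⧸ IsLocalRing.maximalIdeal S)) rs S
    hreg.toIsWeaklyRegular fun r hr ↦ hann r (hmem r hr)
  have h3 : Nontrivial ((S ⧸ IsLocalRing.maximalIdeal S) →ₗ[S]
      (S ⧸ (Ideal.ofList rs • ⊤ : Submodule S S))) := by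
    rw [← not_subsingleton_iff_nontrivial, IsSMulRegular.subsingleton_linearMap_iff]
    rintro ⟨r, hr, hr'⟩
    rw [Ideal.annihilator_quotient] at hr
    -- A further regular element would give a regular sequence longer than the dimension.
    have hreg' : RingTheory.Sequence.IsRegular S (rs ++ [r]) := by
      refine (IsLocalRing.isRegular_iff_isWeaklyRegular_of_subset_maximalIdeal ?_).2 ?_
      · simp only [List.mem_append, List.mem_singleton]
        rintro s (hs | rfl)
        exacts [hmem s hs, hr]
      · rw [RingTheory.Sequence.isWeaklyRegular_append_iff,
          RingTheory.Sequence.isWeaklyRegular_singleton_iff]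
        exact ⟨hreg.toIsWeaklyRegular, hr'⟩
    have h4 := ringKrullDim_add_length_eq_ringKrullDim_of_isRegular _ hreg'
    have : Nontrivial (S ⧸ Ideal.ofList (rs ++ [r])) :=
      Ideal.Quotient.nontrivial_iff.2 fun h ↦ hreg'.2 (by simp [h])
    have h5 : ((rs ++ [r]).length : WithBot ℕ∞) ≤ rs.length := by
      rw [← hlen, ← h4]
      exact le_add_of_nonneg_left ringKrullDim_nonneg_of_nontrivial
    have h6 : (rs ++ [r]).length ≤ rs.length := by exact_mod_cast h5
    simp at h6
  have hd : ringDepth S = rs.length := by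
    unfold ringDepth
    apply le_antisymm
    · exact sInf_le ⟨rs.length, rfl, (extLegacy_nontrivial_iff _ _ _).2 (h2 h3)⟩
    · refine le_sInf ?_
      rintro _ ⟨m, rfl, hm⟩
      by_contra hlt
      have := h1 m (by simpa using hlt)
      exact not_subsingleton_iff_nontrivial.2 ((extLegacy_nontrivial_iff _ _ _).1 hm) this
  rw [hd, hlen]
  rfl

/-- A nonzero element killed by the maximal ideal `m` is the image of `1` under a nonzero map
`S/m → S`, so the depth is `0`. -/
theorem ringDepth_eq_zero {S : Type} [CommRing S] [IsLocalRing S] (x : S) (hx : x ≠ 0)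
    (h : ∀ r ∈ IsLocalRing.maximalIdeal S, r * x = 0) : ringDepth S = 0 := by
  refine le_antisymm (sInf_le ⟨0, rfl, (extLegacy_nontrivial_iff _ _ _).2 ?_⟩) bot_le
  rw [Ext.homEquiv₀.nontrivial_congr]
  let f : (S ⧸ IsLocalRing.maximalIdeal S) →ₗ[S] S :=
    Submodule.liftQ _ (LinearMap.toSpanSingleton S S x) fun r hr ↦ by simpa using h r hr
  refine ⟨ModuleCat.ofHom f, 0, fun h0 ↦ hx ?_⟩
  have h1 : f (Submodule.Quotient.mk 1) = 0 := congrArg (fun g ↦ g.hom (Submodule.Quotient.mk 1)) h0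
  rw [Submodule.liftQ_apply] at h1
  simpa using h1

end Homological

/-! ### Flat integral algebras over `ℂ[X₀, X₁]` -/

/-- Along an integral extension, a chain of primes below `p` contracts to a chain of the same
length, by incomparability. -/
theorem height_le_height_under {B R : Type} [CommRing B] [CommRing R] [Algebra B R]
    [Algebra.IsIntegral B R] (p : Ideal R) [p.IsPrime] : p.height ≤ (p.under B).height := by
  have h := Order.height_le_height_apply_of_strictMono
    (PrimeSpectrum.comap (algebraMap B R)) (fun P Q h ↦ Ideal.IsIntegral.comap_lt_comap h)
    ⟨p, inferInstance⟩
  rwa [← PrimeSpectrum.height_eq_orderHeight, ← PrimeSpectrum.height_eq_orderHeight] at h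

/-- A flat integral algebra over `ℂ[X₀, X₁]` is Cohen–Macaulay: the contraction `q` of a prime `p`
contains a regular sequence of length at least `height q ≥ height p`, and it stays regular
in the localization at `p` by flatness. -/
theorem isCohenMacaulayRing_of_flat {R : Type} [CommRing R] [IsNoetherianRing R]
    [Algebra (MvPolynomial (Fin 2) ℂ) R] [Module.Flat (MvPolynomial (Fin 2) ℂ) R]
    [Algebra.IsIntegral (MvPolynomial (Fin 2) ℂ) R] : IsCohenMacaulayRing R := by
  intro p _
  set B := MvPolynomial (Fin 2) ℂ
  let q := p.under B
  -- For `q ≠ 0`, take a prime element `f ∈ q`; any `g ∈ q` outside `(f)` is regular modulo `f`.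
  obtain ⟨rs, hreg, hmem, hht⟩ : ∃ rs : List B, RingTheory.Sequence.IsWeaklyRegular B rs ∧
      (∀ r ∈ rs, r ∈ q) ∧ q.height ≤ rs.length := by
    by_cases h0 : q = ⊥
    · exact ⟨[], by simp, by simp, by simp [h0, Ideal.height_bot]⟩
    obtain ⟨f, hfq, hf⟩ := Ideal.IsPrime.exists_mem_prime_of_ne_bot (inferInstance : q.IsPrime) h0
    have hfreg : IsSMulRegular B f := IsSMulRegular.of_ne_zero hf.ne_zero
    by_cases h1 : q = Ideal.span {f}
    · refine ⟨[f], by simpa using hfreg, by simpa using hfq, ?_⟩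
      rw [h1]
      simpa using Ideal.height_span_singleton_le_one hf.not_isUnit
    · have h2 : ¬ q ≤ Ideal.span {f} := fun h ↦
        h1 (le_antisymm h ((Ideal.span_singleton_le_iff_mem _).2 hfq))
      obtain ⟨g, hgq, hgf⟩ := Set.not_subset.1 h2
      refine ⟨[f, g], ?_, by simpa [hfq] using! hgq, ?_⟩
      · rw [RingTheory.Sequence.isWeaklyRegular_cons_iff,
          RingTheory.Sequence.isWeaklyRegular_singleton_iff]
        refine ⟨hfreg, (isSMulRegular_quotient_iff_mem_of_smul_mem _ _).2 fun x hx ↦ ?_⟩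
        rw [← Submodule.ideal_span_singleton_smul, smul_eq_mul, Ideal.mul_top,
          Ideal.mem_span_singleton] at hx ⊢
        exact (hf.dvd_or_dvd hx).resolve_left fun h ↦ hgf (Ideal.mem_span_singleton.2 h)
      · have : ringKrullDim B = 2 := by
          simp [B, MvPolynomial.ringKrullDim_of_isNoetherianRing]
        have h3 := Ideal.height_le_ringKrullDim_of_ne_top (I := q)
          (Ideal.IsPrime.ne_top inferInstance)
        rw [this] at h3
        have h4 : q.height ≤ 2 := WithBot.coe_le_coe.1 h3
        simpa using h4
  have : Module.Flat R (Localization.AtPrime p) := IsLocalization.flat _ p.primeCompl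
  have : Module.Flat B (Localization.AtPrime p) := Module.Flat.trans B R _
  have hreg' := hreg.of_flat (S := Localization.AtPrime p)
  have hmem' : ∀ r ∈ rs.map (algebraMap B (Localization.AtPrime p)),
      r ∈ IsLocalRing.maximalIdeal (Localization.AtPrime p) := by
    intro r hr
    obtain ⟨b, hb, rfl⟩ := List.mem_map.1 hr
    rw [IsScalarTower.algebraMap_apply B R]
    exact (IsLocalization.AtPrime.to_map_mem_maximal_iff (Localization.AtPrime p) p _).2 (hmem b hb)
  refine ringDepth_eq _ ((IsLocalRing.isRegular_iff_isWeaklyRegular_of_subset_maximalIdeal hmem').2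
    hreg') hmem' ?_
  rw [IsLocalization.AtPrime.ringKrullDim_eq_height p, List.length_map]
  exact_mod_cast (height_le_height_under (B := B) p).trans hht

/-! ### The toric ideal and its monomial parametrisation -/

section Toric

/-- The matrix with columns `(1,3), (2,1), (3,3), (4,2), (5,0)`. -/
abbrev colMat : Matrix (Fin 2) (Fin 5) ℤ := !![1, 2, 3, 4, 5; 3, 1, 3, 2, 0]

/-- First coordinate of the multidegree `Au`. -/
def dx (u : Fin 5 →₀ ℕ) : ℕ := u 0 + 2 * u 1 + 3 * u 2 + 4 * u 3 + 5 * u 4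

/-- Second coordinate of the multidegree `Au`. -/
def dy (u : Fin 5 →₀ ℕ) : ℕ := 3 * u 0 + u 1 + 3 * u 2 + 2 * u 3

/-- The total degree of the monomial `∂^u`. -/
def len (u : Fin 5 →₀ ℕ) : ℕ := u 0 + u 1 + u 2 + u 3 + u 4

/-- The exponent vector with the five given entries. -/
def ex (a b c d e : ℕ) : Fin 5 →₀ ℕ := Finsupp.equivFunOnFinite.symm ![a, b, c, d, e]

@[simp] lemma ex_zero (a b c d e : ℕ) : ex a b c d e 0 = a := rfl
@[simp] lemma ex_one (a b c d e : ℕ) : ex a b c d e 1 = b := rfl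
@[simp] lemma ex_two (a b c d e : ℕ) : ex a b c d e 2 = c := rfl
@[simp] lemma ex_three (a b c d e : ℕ) : ex a b c d e 3 = d := rfl
@[simp] lemma ex_four (a b c d e : ℕ) : ex a b c d e 4 = e := rfl

lemma exp_ext {u v : Fin 5 →₀ ℕ} (h0 : u 0 = v 0) (h1 : u 1 = v 1) (h2 : u 2 = v 2)
    (h3 : u 3 = v 3) (h4 : u 4 = v 4) : u = v := by
  ext j; fin_cases j <;> assumption

lemma mulVec_eq_iff (u v : Fin 5 →₀ ℕ) :
    colMat.mulVec (fun j => (u j : ℤ)) = colMat.mulVec (fun j => (v j : ℤ)) ↔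
      dx u = dx v ∧ dy u = dy v := by
  simp only [funext_iff, Fin.forall_fin_two, Matrix.mulVec, dotProduct, Fin.sum_univ_five, dx, dy]
  simp
  omega

lemma sub_mem_toricIdeal {u v : Fin 5 →₀ ℕ} (hx : dx u = dx v) (hy : dy u = dy v) :
    (monomial u 1 - monomial v 1 : MvPolynomial (Fin 5) ℂ) ∈ toricIdeal colMat :=
  Ideal.subset_span ⟨u, v, (mulVec_eq_iff u v).2 ⟨hx, hy⟩, rfl⟩

/-- The exponent vector `(x, y)` in two variables. -/
def ex2 (x y : ℕ) : Fin 2 →₀ ℕ := Finsupp.equivFunOnFinite.symm ![x, y]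

@[simp] lemma ex2_zero (x y : ℕ) : ex2 x y 0 = x := rfl
@[simp] lemma ex2_one (x y : ℕ) : ex2 x y 1 = y := rfl

lemma ex2_inj {x y x' y' : ℕ} : ex2 x y = ex2 x' y' ↔ x = x' ∧ y = y' := by
  simp [ex2, funext_iff, Fin.forall_fin_two]

/-- The monomial parametrisation `∂ⱼ ↦ t^{aⱼ}`. Its coefficient at `t^s` is the sum of the
coefficients over the fibre `{u | Au = s}`. -/
def param : MvPolynomial (Fin 5) ℂ →ₐ[ℂ] MvPolynomial (Fin 2) ℂ :=
  aeval ![monomial (ex2 1 3) 1, monomial (ex2 2 1) 1, monomial (ex2 3 3) 1,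
    monomial (ex2 4 2) 1, monomial (ex2 5 0) 1]

lemma param_monomial (u : Fin 5 →₀ ℕ) (c : ℂ) :
    param (monomial u c) = monomial (ex2 (dx u) (dy u)) c := by
  rw [param, aeval_monomial, Finsupp.prod_fintype _ _ (by simp)]
  simp only [Fin.prod_univ_five, algebraMap_eq, C_apply, Matrix.cons_val, monomial_pow,
    monomial_mul, one_pow, mul_one, zero_add]
  congr 2
  ext j
  fin_cases j <;> simp [dx, dy] <;> ring

lemma param_eq_zero {f : MvPolynomial (Fin 5) ℂ} (hf : f ∈ toricIdeal colMat) : param f = 0 := by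
  have : toricIdeal colMat ≤ RingHom.ker param := by
    rw [toricIdeal, Ideal.span_le]
    rintro _ ⟨u, v, h, rfl⟩
    obtain ⟨h1, h2⟩ := (mulVec_eq_iff u v).1 h
    simp [RingHom.mem_ker, param_monomial, h1, h2]
  exact this hf

end Toric

/-! ### The toric ring as a free module -/

section Free

/-- The inclusion `ℂ[X₀, X₁] → ℂ[∂]`, `X₀ ↦ ∂₁`, `X₁ ↦ ∂₅`. -/
def incl : MvPolynomial (Fin 2) ℂ →ₐ[ℂ] MvPolynomial (Fin 5) ℂ := aeval ![X 0, X 4]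

lemma incl_monomial (v : Fin 2 →₀ ℕ) (c : ℂ) :
    incl (monomial v c) = monomial (ex (v 0) 0 0 0 (v 1)) c := by
  rw [incl, aeval_monomial, Finsupp.prod_fintype _ _ (by simp)]
  simp only [Fin.prod_univ_two, algebraMap_eq, C_apply, Matrix.cons_val, X, monomial_pow,
    monomial_mul, one_pow, mul_one, zero_add]
  congr 2
  apply exp_ext <;> simp

/-- The exponents of the fifteen basis elements `∂₂^i ∂₃^j`, `i < 3`, `j < 5`. -/
def bexp (p : Fin 3 × Fin 5) : Fin 5 →₀ ℕ := ex 0 p.1 p.2 0 0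

/-- The multidegrees of the monomials `∂₁^a ∂₅^b ∂₂^i ∂₃^j` with `i < 3`, `j < 5` are pairwise
distinct, so that the coefficients of `f` can be read off from the parametrisation. -/
lemma coeff_param_incl (p q : Fin 3 × Fin 5) (v : Fin 2 →₀ ℕ) (f : MvPolynomial (Fin 2) ℂ) :
    coeff (ex2 (dx (ex (v 0) q.1 q.2 0 (v 1))) (dy (ex (v 0) q.1 q.2 0 (v 1))))
      (param (incl f * monomial (bexp p) 1)) = if p = q then coeff v f else 0 := by
  induction f using MvPolynomial.induction_on' with
  | add f g hf hg =>
    rw [map_add, add_mul, map_add, coeff_add, hf, hg]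
    split_ifs <;> simp
  | monomial w c =>
    obtain ⟨i, j⟩ := p
    obtain ⟨i', j'⟩ := q
    rw [incl_monomial, monomial_mul, param_monomial, coeff_monomial, coeff_monomial, mul_one]
    have key : ex2 (dx (ex (w 0) 0 0 0 (w 1) + bexp (i, j)))
        (dy (ex (w 0) 0 0 0 (w 1) + bexp (i, j))) =
        ex2 (dx (ex (v 0) i' j' 0 (v 1))) (dy (ex (v 0) i' j' 0 (v 1))) ↔
        (i, j) = (i', j') ∧ w = v := by
      rw [ex2_inj]
      have hw : w = v ↔ w 0 = v 0 ∧ w 1 = v 1 := by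
        simp [DFunLike.ext_iff, Fin.forall_fin_two]
      simp only [hw, Prod.mk.injEq, Fin.ext_iff, dx, dy, bexp, Finsupp.add_apply, ex_zero, ex_one,
        ex_two, ex_three, ex_four]
      omega
    simp only [key]
    split_ifs <;> simp_all

/-- `ℂ[∂]/I_A` is free over `ℂ[∂₁, ∂₅]` with basis `∂₂^i ∂₃^j`, `i < 3`, `j < 5`. The quotient is
an abstract ring `R` with a surjection `π` of kernel `I_A`. -/
lemma isCohenMacaulayRing_of_surjective {R : Type} [CommRing R] [IsNoetherianRing R]
    [Algebra (MvPolynomial (Fin 2) ℂ) R] (π : MvPolynomial (Fin 5) ℂ →+* R)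
    (hπ : Function.Surjective π) (hker : RingHom.ker π = toricIdeal colMat)
    (halg : algebraMap (MvPolynomial (Fin 2) ℂ) R = π.comp (incl : _ →+* _)) :
    IsCohenMacaulayRing R := by
  have smul_def (f : MvPolynomial (Fin 2) ℂ) (g : MvPolynomial (Fin 5) ℂ) :
      f • π g = π (incl f * g) := by
    rw [Algebra.smul_def, map_mul, halg]; rfl
  let b (p : Fin 3 × Fin 5) := π (monomial (bexp p) 1)
  have hli : LinearIndependent (MvPolynomial (Fin 2) ℂ) b := by
    rw [Fintype.linearIndependent_iff]
    intro f hf q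
    simp only [b, smul_def] at hf
    rw [← map_sum] at hf
    have h := param_eq_zero (hker.le (RingHom.mem_ker.2 hf))
    ext v
    have h1 := congrArg
      (coeff (ex2 (dx (ex (v 0) q.1 q.2 0 (v 1))) (dy (ex (v 0) q.1 q.2 0 (v 1))))) h
    rw [map_sum, coeff_sum] at h1
    simpa only [coeff_param_incl, Finset.sum_ite_eq', Finset.mem_univ, if_true, coeff_zero] using h1
  have hsp : ⊤ ≤ Submodule.span (MvPolynomial (Fin 2) ℂ) (Set.range b) := by
    rintro x -
    obtain ⟨g, rfl⟩ := hπ x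
    induction g using MvPolynomial.induction_on' with
    | add f g hf hg => rw [map_add]; exact add_mem hf hg
    | monomial u c =>
      -- The relations `∂₄ = ∂₂²`, `∂₂³ = ∂₁∂₅`, `∂₃⁵ = ∂₁⁵∂₅²` bring `∂^u` to normal form.
      let n := u 1 + 2 * u 3
      let p : Fin 3 × Fin 5 := (⟨n % 3, by omega⟩, ⟨u 2 % 5, by omega⟩)
      let v := ex2 (u 0 + n / 3 + 5 * (u 2 / 5)) (u 4 + n / 3 + 2 * (u 2 / 5))
      have h : π (monomial u c) = (monomial v c : MvPolynomial (Fin 2) ℂ) • b p := by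
        rw [smul_def, incl_monomial, monomial_mul, mul_one]
        rw [← sub_eq_zero, ← map_sub, ← RingHom.mem_ker, hker]
        have := (toricIdeal colMat).mul_mem_left (C c) (sub_mem_toricIdeal (u := u)
          (v := ex (v 0) 0 0 0 (v 1) + bexp p)
          (by simp [dx, v, p, bexp, n]; omega) (by simp [dy, v, p, bexp, n]; omega))
        simpa [mul_sub, C_mul_monomial] using this
      change π (monomial u c) ∈ _
      rw [h]
      exact Submodule.smul_mem _ _ (Submodule.subset_span ⟨p, rfl⟩)
  let B := Module.Basis.mk hli hsp
  have : Module.Free (MvPolynomial (Fin 2) ℂ) R := Module.Free.of_basis B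
  have : Module.Finite (MvPolynomial (Fin 2) ℂ) R := Module.Finite.of_basis B
  exact isCohenMacaulayRing_of_flat

theorem isCohenMacaulayRing_toric :
    IsCohenMacaulayRing (MvPolynomial (Fin 5) ℂ ⧸ toricIdeal colMat) :=
  let _ : Algebra (MvPolynomial (Fin 2) ℂ) (MvPolynomial (Fin 5) ℂ ⧸ toricIdeal colMat) :=
    ((Ideal.Quotient.mk (toricIdeal colMat)).comp (incl : _ →+* _)).toAlgebra
  isCohenMacaulayRing_of_surjective (Ideal.Quotient.mk _) Ideal.Quotient.mk_surjective
    Ideal.mk_ker rfl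

end Free

/-! ### The initial ideal -/

section Initial

lemma coeff_param_eq_sum (f : MvPolynomial (Fin 5) ℂ) (s : Fin 2 →₀ ℕ) :
    coeff s (param f) = ∑ u ∈ f.support, if ex2 (dx u) (dy u) = s then coeff u f else 0 := by
  conv_lhs => rw [f.as_sum]
  simp only [map_sum, coeff_sum, param_monomial, coeff_monomial]

lemma coeff_param_congr {f g : MvPolynomial (Fin 5) ℂ} {x y : ℕ}
    (h : ∀ u, dx u = x → dy u = y → coeff u f = coeff u g) :
    coeff (ex2 x y) (param f) = coeff (ex2 x y) (param g) := by
  rw [← sub_eq_zero, ← coeff_sub, ← map_sub, coeff_param_eq_sum]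
  refine Finset.sum_eq_zero fun u _ => ?_
  split_ifs with hu
  · obtain ⟨h1, h2⟩ := ex2_inj.1 hu
    rw [coeff_sub, h u h1 h2, sub_self]
  · rfl

lemma degree_eq_len (u : Fin 5 →₀ ℕ) : u.degree = len u := by
  rw [Finsupp.degree_eq_sum, Fin.sum_univ_five, len]

lemma wt_one (u : Fin 5 →₀ ℕ) : wt (fun _ => 1) u = len u := by
  simp [wt, Fin.sum_univ_five, len]

lemma coeff_initialForm (f : MvPolynomial (Fin 5) ℂ) (u : Fin 5 →₀ ℕ)
    [Decidable (∀ v ∈ f.support, len v ≤ len u)] :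
    coeff u (initialForm (fun _ => 1) f) =
      if ∀ v ∈ f.support, len v ≤ len u then coeff u f else 0 := by
  simp only [initialForm, coeff_sum, coeff_monomial, Finset.sum_ite_eq', Finset.mem_filter, wt_one,
    Nat.cast_le]
  split_ifs with h1 h2 h2
  · rfl
  · exact absurd h1.2 h2
  · by_contra h
    exact h1 ⟨mem_support_iff.2 (Ne.symm h), h2⟩
  · rfl

/-- The initial form is the top homogeneous component. -/
lemma exists_initialForm_eq {f : MvPolynomial (Fin 5) ℂ} (hf : f ≠ 0) :
    ∃ D, (∀ v, D < len v → coeff v f = 0) ∧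
      initialForm (fun _ => 1) f = homogeneousComponent D f := by
  classical
  obtain ⟨u, hu, hmax⟩ := f.support.exists_max_image len (support_nonempty.2 hf)
  refine ⟨len u, fun v hv => ?_, ?_⟩
  · by_contra h
    exact (hmax v (mem_support_iff.2 h)).not_gt hv
  · ext v
    rw [coeff_initialForm, coeff_homogeneousComponent, degree_eq_len]
    split_ifs with h1 h2 h2
    · rfl
    · by_contra h
      exact h2 (le_antisymm (hmax v (mem_support_iff.2 h)) (h1 u hu))
    · exact absurd (fun w hw => h2 ▸ hmax w hw) h1
    · rfl

/-- If `ℓ` is a lower bound for the lengths of the monomials of multidegree `(x, y)`, then the sum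
of the coefficients over the monomials of multidegree `(x, y)` and length `ℓ` vanishes on
`in(I_A)`: for `∂^w in(f)` it is either an empty sum or the full fibre sum of `∂^w f ∈ I_A`. -/
lemma coeff_param_initialIdeal {x y ℓ : ℕ} (hℓ : ∀ u, dx u = x → dy u = y → ℓ ≤ len u)
    {h : MvPolynomial (Fin 5) ℂ} (hh : h ∈ initialIdeal (fun _ => 1) (toricIdeal colMat)) :
    coeff (ex2 x y) (param (homogeneousComponent ℓ h)) = 0 := by
  suffices H : ∀ g, coeff (ex2 x y) (param (homogeneousComponent ℓ (g * h))) = 0 by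
    simpa using H 1
  refine Submodule.span_induction
    (p := fun h _ => ∀ g, coeff (ex2 x y) (param (homogeneousComponent ℓ (g * h))) = 0)
    ?_ (by simp)
    (fun a b _ _ ha hb g => by rw [mul_add, map_add, map_add, coeff_add, ha, hb, add_zero])
    (fun a b _ hb g => by rw [smul_eq_mul, ← mul_assoc, hb]) hh
  rintro _ ⟨f, hfI, hf0, rfl⟩ g
  obtain ⟨D, hD, hin⟩ := exists_initialForm_eq hf0
  rw [hin]
  induction g using MvPolynomial.induction_on' with
  | add g g' hg hg' => rw [add_mul, map_add, map_add, coeff_add, hg, hg', add_zero]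
  | monomial w c =>
    have hlen (u) (hwu : w ≤ u) : len u = len (u - w) + len w := by
      have := hwu 0; have := hwu 1; have := hwu 2; have := hwu 3; have := hwu 4
      simp only [len, Finsupp.tsub_apply]
      omega
    by_cases hwD : len w + D = ℓ
    · rw [← coeff_zero (ex2 x y),
          ← param_eq_zero ((toricIdeal colMat).mul_mem_left (monomial w c) hfI)]
      refine coeff_param_congr fun u hx hy => ?_
      have h1 := hℓ u hx hy
      rw [coeff_homogeneousComponent, degree_eq_len, coeff_monomial_mul', coeff_monomial_mul',
        coeff_homogeneousComponent, degree_eq_len]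
      by_cases hwu : w ≤ u
      · have h2 := hlen u hwu
        by_cases h3 : len u = ℓ
        · rw [if_pos h3, if_pos hwu, if_pos hwu, if_pos (by omega)]
        · rw [if_neg h3, if_pos hwu, hD _ (by omega), mul_zero]
      · simp [hwu]
    · rw [← coeff_zero (ex2 x y), ← map_zero param]
      refine coeff_param_congr fun u hx hy => ?_
      rw [coeff_homogeneousComponent, degree_eq_len, coeff_monomial_mul',
        coeff_homogeneousComponent, degree_eq_len]
      by_cases hwu : w ≤ u
      · have h2 := hlen u hwu
        split_ifs <;> first | omega | simp
      · simp [hwu]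

/-- The binomial `∂^u - ∂^v ∈ I_A` has initial form `∂^u` when `∂^v` is shorter. -/
lemma monomial_mem_initialIdeal {u : Fin 5 →₀ ℕ} (v : Fin 5 →₀ ℕ) (hx : dx u = dx v)
    (hy : dy u = dy v) (hlen : len v < len u) :
    monomial u 1 ∈ initialIdeal (fun _ => 1) (toricIdeal colMat) := by
  classical
  have hne : v ≠ u := by rintro rfl; exact hlen.false
  have hu : coeff u (monomial u 1 - monomial v 1 : MvPolynomial (Fin 5) ℂ) = 1 := by
    simp [coeff_monomial, hne]
  refine Ideal.subset_span ⟨_, sub_mem_toricIdeal hx hy, fun h => ?_, ?_⟩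
  · simp [h] at hu
  · ext w
    rw [coeff_initialForm]
    by_cases hw : u = w
    · subst hw
      rw [if_pos, hu, coeff_monomial, if_pos rfl]
      intro t ht
      by_contra! hlt
      rw [mem_support_iff, coeff_sub, coeff_monomial, coeff_monomial, if_neg, if_neg] at ht
      · simp at ht
      · rintro rfl; omega
      · rintro rfl; omega
    · rw [coeff_monomial, if_neg hw]
      split_ifs with h
      · have h1 := h u (by simp [mem_support_iff, hu])
        rw [coeff_sub, coeff_monomial, coeff_monomial, if_neg hw, if_neg, sub_zero]
        rintro rfl
        omega
      · rfl

end Initial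

/-! ### Two monomial primes containing the initial ideal -/

section Primes

/-- The substitution `∂ᵢ ↦ 0` for `i ∈ s`. -/
def kill (s : Set (Fin 5)) : MvPolynomial (Fin 5) ℂ →ₐ[ℂ] MvPolynomial (Fin 5) ℂ := by
  classical exact aeval fun i => if i ∈ s then 0 else X i

open Classical in
lemma coeff_kill (s : Set (Fin 5)) (f : MvPolynomial (Fin 5) ℂ) (v : Fin 5 →₀ ℕ) :
    coeff v (kill s f) = if ∀ i ∈ s, v i = 0 then coeff v f else 0 := by
  induction f using MvPolynomial.induction_on' with
  | add f g hf hg => rw [map_add, coeff_add, hf, hg, coeff_add]; split_ifs <;> simp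
  | monomial u c =>
    have : kill s (monomial u c) = if ∀ i ∈ s, u i = 0 then monomial u c else 0 := by
      rw [kill, aeval_monomial, algebraMap_eq]
      split_ifs with h
      · rw [monomial_eq]
        congr 1
        refine Finsupp.prod_congr fun i hi => ?_
        rw [if_neg fun his => Finsupp.mem_support_iff.1 hi (h i his)]
      · push Not at h
        obtain ⟨i, his, hi⟩ := h
        rw [Finsupp.prod, Finset.prod_eq_zero (Finsupp.mem_support_iff.2 hi), mul_zero]
        simp [his, hi]
    rw [this]
    by_cases huv : u = v
    · subst huv; split_ifs <;> simp
    · split_ifs <;> simp [coeff_monomial, huv]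

lemma isPrime_span_X (s : Set (Fin 5)) :
    (Ideal.span (X '' s : Set (MvPolynomial (Fin 5) ℂ))).IsPrime := by
  classical
  have : Ideal.span (X '' s : Set (MvPolynomial (Fin 5) ℂ)) = RingHom.ker (kill s) := by
    ext f
    rw [mem_ideal_span_X_image, RingHom.mem_ker, MvPolynomial.ext_iff]
    refine forall_congr' fun v => ?_
    rw [coeff_kill, coeff_zero, mem_support_iff]
    by_cases h : ∀ i ∈ s, v i = 0
    · rw [if_pos h]
      refine ⟨fun H => by_contra fun h0 => ?_, fun h0 hne => absurd h0 hne⟩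
      obtain ⟨i, hi, hv⟩ := H h0
      exact hv (h i hi)
    · rw [if_neg h]
      push Not at h
      simp [h]
  rw [this]
  exact RingHom.ker_isPrime _

/-- The prime ideal `(∂₂, ∂₄, ∂₅)`; the variable `∂ⱼ` is `X (j - 1)`. -/
def qIdeal : Ideal (MvPolynomial (Fin 5) ℂ) := Ideal.span (X '' {1, 3, 4})

/-- The prime ideal `(∂₁, ∂₂, ∂₄, ∂₅)`. -/
def pIdeal : Ideal (MvPolynomial (Fin 5) ℂ) := Ideal.span (X '' {0, 1, 3, 4})

instance : qIdeal.IsPrime := isPrime_span_X _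
instance : pIdeal.IsPrime := isPrime_span_X _

lemma qIdeal_le_pIdeal : qIdeal ≤ pIdeal :=
  Ideal.span_mono (Set.image_mono (Set.subset_insert _ _))

lemma X_zero_mem_pIdeal : X 0 ∈ pIdeal := Ideal.subset_span ⟨0, by simp, rfl⟩

lemma X_zero_notMem_qIdeal : X 0 ∉ qIdeal := by
  rw [qIdeal, mem_ideal_span_X_image]
  intro h
  have := h (Finsupp.single 0 1) (by simp [mem_support_iff, coeff_X])
  simp at this

/-- Each `∂₁^a ∂₃^c` is the unique shortest monomial of its multidegree (the second coordinate of
`aⱼ` is at most `3`, with equality only for `j = 1, 3`), so it cannot occur in an initial form. -/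
lemma initialIdeal_le_qIdeal : initialIdeal (fun _ => 1) (toricIdeal colMat) ≤ qIdeal := by
  classical
  rw [initialIdeal, Ideal.span_le]
  rintro _ ⟨f, hfI, -, rfl⟩
  rw [SetLike.mem_coe, qIdeal, mem_ideal_span_X_image]
  intro u hu
  rw [mem_support_iff, coeff_initialForm] at hu
  by_contra! hno
  have h1 : u 1 = 0 := hno 1 (by simp)
  have h3 : u 3 = 0 := hno 3 (by simp)
  have h4 : u 4 = 0 := hno 4 (by simp)
  split_ifs at hu with hmax
  · have h := congrArg (coeff (ex2 (dx u) (dy u))) (param_eq_zero hfI)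
    rw [coeff_param_eq_sum, Finset.sum_eq_single u, if_pos rfl, coeff_zero] at h
    · exact hu h
    · intro v hv hne
      rw [if_neg]
      intro h
      obtain ⟨hx, hy⟩ := ex2_inj.1 h
      have hl := hmax v hv
      simp only [dx, dy, len] at hx hy hl
      exact hne (exp_ext (by omega) (by omega) (by omega) (by omega) (by omega))
    · intro h
      exact absurd (mem_support_iff.2 hu) h
  · exact hu rfl

end Primes

/-! ### The embedded component -/

section Embedded

/-- The exponent of `∂₁²∂₂∂₄³`, a monomial whose annihilator modulo `in(I_A)` is
`(∂₁, ∂₂, ∂₄, ∂₅)`. -/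
def mexp : Fin 5 →₀ ℕ := ex 2 1 0 3 0

/-- The products of `∂₁²∂₂∂₄³` with `∂₁`, `∂₂`, `∂₄`, `∂₅` lie in `in(I_A)`, since they have the
multidegrees of the shorter monomials `∂₂∂₃⁵`, `∂₁²∂₄⁴`, `∂₃⁵∂₅`, `∂₁∂₄⁵` respectively. -/
lemma X_mul_mem (i : Fin 5) (hi : i ∈ ({0, 1, 3, 4} : Set (Fin 5))) :
    X i * monomial mexp 1 ∈ initialIdeal (fun _ => 1) (toricIdeal colMat) := by
  rw [X, monomial_mul, mul_one]
  rcases hi with rfl | rfl | rfl | rfl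
  · exact monomial_mem_initialIdeal (ex 0 1 5 0 0) (by simp [dx, mexp]) (by simp [dy, mexp])
      (by simp [len, mexp])
  · exact monomial_mem_initialIdeal (ex 2 0 0 4 0) (by simp [dx, mexp]) (by simp [dy, mexp])
      (by simp [len, mexp])
  · exact monomial_mem_initialIdeal (ex 0 0 5 0 1) (by simp [dx, mexp]) (by simp [dy, mexp])
      (by simp [len, mexp])
  · exact monomial_mem_initialIdeal (ex 1 0 0 5 0) (by simp [dx, mexp]) (by simp [dy, mexp])
      (by simp [len, mexp])

/-- No `g` outside `(∂₁, ∂₂, ∂₄, ∂₅)` kills `∂₁²∂₂∂₄³` modulo `in(I_A)`: if `∂₃^k` occurs in `g`,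
the functional attached to the multidegree `(16, 13) + k (3, 3)` and the length `6 + k`, which is
minimal for this multidegree, extracts its coefficient from the product. -/
lemma mul_notMem {g : MvPolynomial (Fin 5) ℂ} (hg : g ∉ pIdeal) :
    g * monomial mexp 1 ∉ initialIdeal (fun _ => 1) (toricIdeal colMat) := by
  intro hmem
  rw [pIdeal, mem_ideal_span_X_image] at hg
  push Not at hg
  obtain ⟨u, hu, hu0⟩ := hg
  have h0 : u 0 = 0 := hu0 0 (by simp)
  have h1 : u 1 = 0 := hu0 1 (by simp)
  have h3 : u 3 = 0 := hu0 3 (by simp)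
  have h4 : u 4 = 0 := hu0 4 (by simp)
  have h := coeff_param_initialIdeal (x := 16 + 3 * u 2) (y := 13 + 3 * u 2) (ℓ := 6 + u 2)
    (fun v hx hy => by simp only [dx, dy, len] at *; omega) hmem
  have key (f : MvPolynomial (Fin 5) ℂ) : coeff (ex2 (16 + 3 * u 2) (13 + 3 * u 2))
      (param (homogeneousComponent (6 + u 2) (f * monomial mexp 1))) = coeff u f := by
    induction f using MvPolynomial.induction_on' with
    | add f g hf hg => rw [add_mul, map_add, map_add, coeff_add, hf, hg, coeff_add]
    | monomial w c =>
      rw [monomial_mul, mul_one, coeff_monomial]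
      by_cases hl : len (w + mexp) = 6 + u 2
      · rw [homogeneousComponent_of_mem (isHomogeneous_monomial c
          ((degree_eq_len _).trans hl)), if_pos rfl, param_monomial, coeff_monomial]
        congr 1
        rw [ex2_inj, eq_iff_iff]
        simp only [len, mexp, Finsupp.add_apply, ex_zero, ex_one, ex_two, ex_three, ex_four, dx,
          dy] at hl ⊢
        constructor
        · rintro ⟨hx, hy⟩
          exact exp_ext (by omega) (by omega) (by omega) (by omega) (by omega)
        · rintro rfl
          omega
      · rw [homogeneousComponent_of_mem (isHomogeneous_monomial c (degree_eq_len _)),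
          if_neg (Ne.symm hl), map_zero, coeff_zero, if_neg]
        rintro rfl
        simp [len, mexp] at hl
        omega
  exact mem_support_iff.1 hu ((key g).symm.trans h)

/-- The localization of `ℂ[∂]/in(I_A)` at `(∂₁, ∂₂, ∂₄, ∂₅)` has depth `0`, as its maximal ideal
kills the nonzero class of `∂₁²∂₂∂₄³`, and positive dimension, as `in(I_A) ⊆ (∂₂, ∂₄, ∂₅)`. -/
theorem not_isCohenMacaulayRing_initial : ¬ IsCohenMacaulayRing
    (MvPolynomial (Fin 5) ℂ ⧸ initialIdeal (fun _ => 1) (toricIdeal colMat)) := by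
  set J := initialIdeal (fun _ => 1) (toricIdeal colMat)
  have hJq : J ≤ qIdeal := initialIdeal_le_qIdeal
  have hJp : J ≤ pIdeal := hJq.trans qIdeal_le_pIdeal
  let π := Ideal.Quotient.mk J
  let p := pIdeal.map π
  let q := qIdeal.map π
  have hp : p.IsPrime := Ideal.isPrime_map_quotientMk_of_isPrime hJp
  have hq : q.IsPrime := Ideal.isPrime_map_quotientMk_of_isPrime hJq
  have hpc : p.comap π = pIdeal := Ideal.comap_map_mk hJp
  have hqc : q.comap π = qIdeal := Ideal.comap_map_mk hJq
  intro hCM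
  have h := hCM p
  let φ := algebraMap (MvPolynomial (Fin 5) ℂ ⧸ J) (Localization.AtPrime p)
  rw [ringDepth_eq_zero (φ (π (monomial mexp 1))) ?_ ?_,
    IsLocalization.AtPrime.ringKrullDim_eq_height p] at h
  · have h0 : p.height = 0 := (WithBot.coe_injective h).symm
    have hle : p ≤ q := (Ideal.height_eq_zero_iff.1 h0).2 ⟨hq, bot_le⟩
      (Ideal.map_mono qIdeal_le_pIdeal)
    refine X_zero_notMem_qIdeal ?_
    rw [← hqc]
    exact hle (Ideal.mem_map_of_mem π X_zero_mem_pIdeal)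
  · intro h0
    obtain ⟨⟨c, hc⟩, hcm⟩ := (IsLocalization.map_eq_zero_iff p.primeCompl _ _).1 h0
    obtain ⟨g, rfl⟩ := Ideal.Quotient.mk_surjective c
    refine mul_notMem (g := g) (fun hg => hc (Ideal.mem_map_of_mem π hg)) ?_
    rw [← Ideal.Quotient.eq_zero_iff_mem, map_mul]
    exact hcm
  · have hle : IsLocalRing.maximalIdeal (Localization.AtPrime p) ≤
        Ideal.torsionOf _ _ (φ (π (monomial mexp 1))) := by
      rw [← Localization.AtPrime.map_eq_maximalIdeal, Ideal.map_le_iff_le_comap,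
        Ideal.map_le_iff_le_comap, pIdeal, Ideal.span_le]
      rintro _ ⟨i, hi, rfl⟩
      change φ (π (X i)) * φ (π (monomial mexp 1)) = 0
      rw [← map_mul, ← map_mul, Ideal.Quotient.eq_zero_iff_mem.2 (X_mul_mem i hi), map_zero]
    exact fun r hr => hle hr

end Embedded

end Row5

/-- Row 5 of the table in Example 7.6 (columns `(1,3),(2,1),(3,3),(4,2),(5,0)`): `ℂ[∂]/I_A` is Cohen–Macaulay but `ℂ[∂]/in(I_A)` is not. -/
theorem stmt14 :
    IsCohenMacaulayRing (MvPolynomial (Fin 5) ℂ ⧸ toricIdeal (!![1, 2, 3, 4, 5; 3, 1, 3, 2, 0] : Matrix (Fin 2) (Fin 5) ℤ)) ∧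
    ¬ IsCohenMacaulayRing (MvPolynomial (Fin 5) ℂ ⧸ initialIdeal (fun _ => 1) (toricIdeal (!![1, 2, 3, 4, 5; 3, 1, 3, 2, 0] : Matrix (Fin 2) (Fin 5) ℤ))) := by
  exact ⟨Row5.isCohenMacaulayRing_toric, Row5.not_isCohenMacaulayRing_initial⟩

end
end
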